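/- Let r be a fixed positive integer. There exist constants c_r > 0, C_r > 0 and p₀(r) such that for every prime p > p₀(r) and every subgroup G of 𝔽_p* with |G| > C_r·p^(1−1/(2r)), the number of pairs (a, b) with a ∈ G, b ∈ 𝔽_p, b ≠ 0, and a, a+b, a+2b, …, a+rb all in G is at least c_r·(|G|/p)^r·p·|G|. -/

import Mathlib

section
open Polynomial

namespace Stp

/-- coefficients of a bivariate polynomial have degree at most `E` -/
def Bdd {F : Type*} [Field F] (E : ℕ) (c : F[X][X]) : Prop := ∀ n, (c.coeff n).natDegree ≤ E

lemma Bdd.mono {F : Type*} [Field F] {E E' : ℕ} {c : F[X][X]} (h : Bdd E c) (hE : E ≤ E') :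
    Bdd E' c := fun n => (h n).trans hE

lemma Bdd.sub {F : Type*} [Field F] {E : ℕ} {c d : F[X][X]} (h : Bdd E c) (h' : Bdd E d) :
    Bdd E (c - d) := fun n => by
  rw [coeff_sub]
  exact (natDegree_sub_le _ _).trans (max_le (h n) (h' n))

lemma Bdd.mul {F : Type*} [Field F] {E E' : ℕ} {c d : F[X][X]} (h : Bdd E c) (h' : Bdd E' d) :
    Bdd (E + E') (c * d) := fun n => by
  rw [coeff_mul]
  refine natDegree_sum_le_of_forall_le _ _ fun x _ => ?_
  exact natDegree_mul_le.trans (add_le_add (h _) (h' _))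

lemma Bdd.one {F : Type*} [Field F] : Bdd 0 (1 : F[X][X]) := fun n => by
  rw [coeff_one]; split_ifs <;> simp

lemma Bdd.pow {F : Type*} [Field F] {E : ℕ} {c : F[X][X]} (h : Bdd E c) (n : ℕ) :
    Bdd (n * E) (c ^ n) := by
  induction n with
  | zero => simpa using Bdd.one
  | succ n ih => rw [pow_succ, add_mul, one_mul]; exact ih.mul h

lemma Bdd.C {F : Type*} [Field F] {E : ℕ} {c : F[X]} (h : c.natDegree ≤ E) :
    Bdd E (Polynomial.C c) := fun n => by
  rw [coeff_C]; split_ifs <;> simp [h]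

lemma Bdd.map {F : Type*} [Field F] (c : F[X]) : Bdd 0 (c.map (Polynomial.C : F →+* F[X])) :=
  fun n => by simp

lemma eval_inj {F : Type*} [Field F] {q E : ℕ} (hE : E < q) :
    ∀ (n : ℕ) (c : F[X][X]), c.natDegree ≤ n → Bdd E c → c.eval (X ^ q) = 0 → c = 0 := by
  have key : ∀ c : F[X][X], Bdd E c → c.eval (X ^ q) = 0 →
      c.coeff 0 = 0 ∧ (divX c).eval (X ^ q) = 0 := by
    intro c hc h0
    have h1 := divX_mul_X_add c
    rw [← h1] at h0
    simp only [eval_add, eval_mul, eval_X, eval_C] at h0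
    have h2 : c.coeff 0 = 0 := by
      by_contra hne
      have hd : (X ^ q : F[X]) ∣ c.coeff 0 :=
        ⟨- eval (X ^ q) c.divX, by linear_combination h0⟩
      have := natDegree_le_of_dvd hd hne
      rw [natDegree_X_pow] at this
      have := hc 0
      omega
    refine ⟨h2, ?_⟩
    rw [h2, add_zero] at h0
    exact (mul_eq_zero.mp h0).resolve_right (pow_ne_zero _ X_ne_zero)
  intro n
  induction n with
  | zero =>
    intro c hn hc h0
    rw [eq_C_of_natDegree_le_zero hn, (key c hc h0).1, C_0]
  | succ n ih =>
    intro c hn hc h0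
    obtain ⟨h1, h2⟩ := key c hc h0
    have h3 : divX c = 0 := ih _ (by rw [natDegree_divX_eq_natDegree_tsub_one]; omega)
      (fun k => by rw [coeff_divX]; exact hc _) h2
    rw [← divX_mul_X_add c, h1, h3]; simp

/-- products of powers of linear factors -/
noncomputable def H {F : Type*} [Field F] {m : ℕ} (t : Fin m → F) (j : Fin m → ℕ) : F[X] :=
  ∏ i, (X - C (t i)) ^ (j i)

lemma H_ne_zero {F : Type*} [Field F] {m : ℕ} (t : Fin m → F) (j : Fin m → ℕ) : H t j ≠ 0 :=
  Finset.prod_ne_zero_iff.mpr fun i _ => pow_ne_zero _ (X_sub_C_ne_zero _)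

lemma H_natDegree {F : Type*} [Field F] {m : ℕ} (t : Fin m → F) (j : Fin m → ℕ) :
    (H t j).natDegree = ∑ i, j i := by
  rw [H, natDegree_prod _ _ fun i _ => pow_ne_zero _ (X_sub_C_ne_zero _)]
  simp

lemma H_mul {F : Type*} [Field F] {m : ℕ} (t : Fin m → F) (j j' : Fin m → ℕ) :
    H t j * H t j' = H t (j + j') := by
  simp [H, ← Finset.prod_mul_distrib, pow_add]

lemma H_rootMult {F : Type*} [Field F] {m : ℕ} (t : Fin m → F) (ht : Function.Injective t)
    (j : Fin m → ℕ) (i : Fin m) :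
    ((H t j).map (C : F →+* F[X])).rootMultiplicity (C (t i)) = j i := by
  classical
  have h0 : (H t j).map (C : F →+* F[X]) =
      (X - C (C (t i))) ^ (j i) * (∏ x ∈ Finset.univ.erase i, (X - C (t x)) ^ (j x)).map C := by
    rw [H, ← Finset.mul_prod_erase _ _ (Finset.mem_univ i), Polynomial.map_mul]
    simp
  have hne : (H t j).map (C : F →+* F[X]) ≠ 0 :=
    (Polynomial.map_ne_zero_iff C_injective).mpr (H_ne_zero t j)
  rw [h0] at hne ⊢
  rw [rootMultiplicity_mul hne, rootMultiplicity_X_sub_C_pow, rootMultiplicity_eq_zero, add_zero]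
  rw [IsRoot, Polynomial.map_prod, eval_prod, Finset.prod_eq_zero_iff]
  rintro ⟨a, ha, h0⟩
  simp only [Polynomial.map_pow, Polynomial.map_sub, map_X, map_C, eval_pow, eval_sub, eval_X,
    eval_C] at h0
  have h1 := eq_zero_of_pow_eq_zero h0
  rw [sub_eq_zero] at h1
  exact (Finset.ne_of_mem_erase ha) (ht (C_injective h1)).symm

lemma eval_H_map {F : Type*} [Field F] {p k : ℕ} [Fact p.Prime] [CharP F p] {m : ℕ} (t : Fin m → F)
    (ht : ∀ i, t i ^ p = t i) (j : Fin m → ℕ) :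
    ((H t j).map (C : F →+* F[X])).eval (X ^ (p ^ k)) = H t j ^ (p ^ k) := by
  have h2 : ∀ i, t i ^ (p ^ k) = t i := by
    intro i
    induction k with
    | zero => simp
    | succ k ih => rw [pow_succ, pow_mul, ih, ht]
  rw [H, Polynomial.map_prod, eval_prod, ← Finset.prod_pow]
  refine Finset.prod_congr rfl fun i _ => ?_
  simp only [Polynomial.map_pow, Polynomial.map_sub, map_X, map_C, eval_pow, eval_sub, eval_X,
    eval_C]
  rw [← pow_mul, mul_comm, pow_mul, sub_pow_char_pow, ← C_pow, h2]

lemma indep {F : Type*} [Field F] {p k N : ℕ} [hp : Fact p.Prime] [CharP F p] {m : ℕ}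
    (t : Fin m → F) (htp : ∀ i, t i ^ p = t i) (hinj : Function.Injective t)
    (hN : p * N + 1 = N + p ^ k) (J : Finset (Fin m → ℕ)) :
    ∀ (_ : ∀ j ∈ J, ∀ i, j i < p - 1) (E : ℕ) (_ : 1 ≤ E)
      (_ : E * (p + 1 + m * p) ^ J.card < p ^ k) (c : (Fin m → ℕ) → F[X][X])
      (_ : ∀ j ∈ J, Bdd E (c j)) (_ : ∑ j ∈ J, (c j).eval (X ^ (p ^ k)) * H t j ^ N = 0),
      ∀ j ∈ J, c j = 0 := by
  classical
  induction J using Finset.induction_on with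
  | empty => simp
  | insert j0 J hj0 ih =>
    intro hJ E hE hEq c hc hrel
    have hp1 := hp.out.two_le
    have hK : 1 ≤ p + 1 + m * p := by omega
    have hEK : E * (p + 1 + m * p) * (p + 1 + m * p) ^ J.card < p ^ k := by
      rw [Finset.card_insert_of_notMem hj0, pow_succ] at hEq
      calc _ = E * ((p + 1 + m * p) ^ J.card * (p + 1 + m * p)) := by ring
        _ < _ := hEq
    have hEq2 : E < p ^ k := lt_of_le_of_lt (by
      rw [mul_assoc]
      exact Nat.le_mul_of_pos_right _ (by positivity)) hEK
    have hJ' : ∀ j ∈ J, ∀ i, j i < p - 1 := fun j hj => hJ j (Finset.mem_insert_of_mem hj)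
    have hc' : ∀ j ∈ J, Bdd E (c j) := fun j hj => hc j (Finset.mem_insert_of_mem hj)
    have hcj0 := hc j0 (Finset.mem_insert_self _ _)
    by_cases h00 : c j0 = 0
    · intro j hj
      rcases Finset.mem_insert.mp hj with rfl | hj
      · exact h00
      · rw [Finset.sum_insert hj0, h00] at hrel
        simp only [eval_zero, zero_mul, zero_add] at hrel
        refine ih hJ' E hE (lt_of_le_of_lt ?_ hEK) c hc' hrel j hj
        exact Nat.mul_le_mul_right _ (Nat.le_mul_of_pos_right _ (by positivity))
    exfalso
    let jc : (Fin m → ℕ) → (Fin m → ℕ) := fun j i => p - 2 - j i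
    let c' : (Fin m → ℕ) → F[X][X] := fun j =>
      c j ^ p * C (H t (jc j)) * (H t j).map (C : F →+* F[X])
    have hjc : ∀ j ∈ insert j0 J, H t j * H t (jc j) = H t (fun _ => p - 2) := by
      intro j hj
      rw [H_mul]
      congr 1
      ext i
      have := hJ j hj i
      simp only [Pi.add_apply, jc]; omega
    have hrel' : ∑ j ∈ insert j0 J, (c' j).eval (X ^ (p ^ k)) * H t j ^ N = 0 := by
      have h1 : (∑ j ∈ insert j0 J, (c j).eval (X ^ (p ^ k)) * H t j ^ N) ^ p = 0 := by
        rw [hrel, zero_pow hp.out.ne_zero]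
      rw [sum_pow_char] at h1
      have h2 : H t (fun _ => p - 2) *
        ∑ j ∈ insert j0 J, ((c j).eval (X ^ (p ^ k)) * H t j ^ N) ^ p = 0 := by rw [h1, mul_zero]
      rw [← h2, Finset.mul_sum]
      refine Finset.sum_congr rfl fun j hj => ?_
      rw [← hjc j hj]
      simp only [c', eval_mul, eval_pow, eval_C, eval_H_map t htp]
      have h3 : (H t j ^ N) ^ p * H t j = H t j ^ N * H t j ^ (p ^ k) := by
        rw [← pow_mul, mul_comm N p, ← pow_succ, hN, pow_add]
      rw [mul_pow]
      linear_combination (-(eval (X ^ p ^ k) (c j)) ^ p * H t (jc j)) * h3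
    have hc'b : ∀ j ∈ insert j0 J, Bdd (p * E + m * p) (c' j) := by
      intro j hj
      have h1 : Bdd (m * p) (C (H t (jc j))) := by
        apply Bdd.C
        rw [H_natDegree]
        refine (Finset.sum_le_card_nsmul _ _ p fun i _ => ?_).trans (by simp)
        simp only [jc]; omega
      exact (((hc j hj).pow p).mul h1).mul (Bdd.map _)
    have hd := ih hJ' (E * (p + 1 + m * p)) (Nat.mul_pos hE hK) hEK
      (fun j => c' j0 * c j - c j0 * c' j) (by
        intro j hj
        have hj' := Finset.mem_insert_of_mem (b := j0) hj
        have hle : p * E + m * p + E ≤ E * (p + 1 + m * p) := by nlinarith [Nat.zero_le (m * p)]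
        refine Bdd.sub (((hc'b j0 (Finset.mem_insert_self _ _)).mul (hc j hj')).mono hle)
          ((hcj0.mul (hc'b j hj')).mono (by omega))) (by
        rw [Finset.sum_insert hj0] at hrel hrel'
        have : ∀ j, eval (X ^ p ^ k) (c' j0 * c j - c j0 * c' j) * H t j ^ N =
          eval (X ^ p ^ k) (c' j0) * (eval (X ^ p ^ k) (c j) * H t j ^ N)
          - eval (X ^ p ^ k) (c j0) * (eval (X ^ p ^ k) (c' j) * H t j ^ N) := by
          intro j; simp only [eval_sub, eval_mul]; ring
        simp only [this]
        rw [Finset.sum_sub_distrib, ← Finset.mul_sum, ← Finset.mul_sum]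
        linear_combination eval (X ^ p ^ k) (c' j0) * hrel - eval (X ^ p ^ k) (c j0) * hrel')
    have hz : ∀ j ∈ J, c j = 0 := by
      intro j hj
      by_contra hne
      have h1 := hd j hj
      simp only [c'] at h1
      have h2 : c j0 ^ (p - 1) * C (H t (jc j0)) * (H t j0).map (C : F →+* F[X])
          = c j ^ (p - 1) * C (H t (jc j)) * (H t j).map (C : F →+* F[X]) := by
        apply mul_left_cancel₀ (mul_ne_zero h00 hne)
        have e1 : c j0 ^ p = c j0 ^ (p - 1) * c j0 := by
          rw [← pow_succ, Nat.sub_add_cancel hp.out.one_le]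
        have e2 : c j ^ p = c j ^ (p - 1) * c j := by
          rw [← pow_succ, Nat.sub_add_cancel hp.out.one_le]
        rw [e1, e2] at h1
        linear_combination h1
      obtain ⟨i, hi⟩ : ∃ i, j0 i ≠ j i := by
        by_contra hcon
        push Not at hcon
        exact hj0 ((funext hcon : j0 = j) ▸ hj)
      have hHn : ∀ j, (H t j).map (C : F →+* F[X]) ≠ 0 := fun j =>
        (Polynomial.map_ne_zero_iff C_injective).mpr (H_ne_zero t j)
      have hCn : ∀ j, (C (H t j) : F[X][X]) ≠ 0 := fun j => C_ne_zero.mpr (H_ne_zero t j)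
      have rm : ∀ a b : F[X][X], a ≠ 0 → b ≠ 0 → rootMultiplicity (C (t i)) (a * b) =
        rootMultiplicity (C (t i)) a + rootMultiplicity (C (t i)) b := fun a b ha hb =>
          rootMultiplicity_mul (mul_ne_zero ha hb)
      have rp : ∀ (a : F[X][X]) (n : ℕ), a ≠ 0 → rootMultiplicity (C (t i)) (a ^ n) =
        n * rootMultiplicity (C (t i)) a := by
        intro a n ha
        induction n with
        | zero => simp
        | succ n ih => rw [pow_succ, rm _ _ (pow_ne_zero _ ha) ha, ih]; ring
      have h3 := congrArg (rootMultiplicity (C (t i))) h2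
      rw [rm _ _ (mul_ne_zero (pow_ne_zero _ h00) (hCn _)) (hHn _),
        rm _ _ (mul_ne_zero (pow_ne_zero _ hne) (hCn _)) (hHn _),
        rm _ _ (pow_ne_zero _ h00) (hCn _), rm _ _ (pow_ne_zero _ hne) (hCn _),
        rp _ _ h00, rp _ _ hne, rootMultiplicity_C, rootMultiplicity_C, H_rootMult t hinj,
        H_rootMult t hinj, add_zero, add_zero] at h3
      have l1 := hJ j0 (Finset.mem_insert_self _ _) i
      have l2 := hJ' j hj i
      have h4 := congrArg (· % (p - 1)) h3
      simp only [Nat.mul_add_mod] at h4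
      rw [Nat.mod_eq_of_lt l1, Nat.mod_eq_of_lt l2] at h4
      exact hi h4
    rw [Finset.sum_insert hj0, Finset.sum_eq_zero (fun j hj => by rw [hz j hj]; simp),
      add_zero] at hrel
    have h5 := (mul_eq_zero.mp hrel).resolve_right (pow_ne_zero _ (H_ne_zero t j0))
    exact h00 (eval_inj hEq2 _ _ le_rfl hcj0 h5)

end Stp
end

section
open Polynomial

namespace Stp

/-- repunit exponent -/
def NN (p n : ℕ) : ℕ := ∑ s ∈ Finset.range n, p ^ s

lemma NN_mul (p n : ℕ) : p * NN p n + 1 = NN p n + p ^ n := by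
  induction n with
  | zero => simp [NN]
  | succ n ih =>
    have : NN p (n + 1) = NN p n + p ^ n := Finset.sum_range_succ _ _
    rw [this, pow_succ, mul_add]; linarith

lemma NN_add (p a b : ℕ) : NN p (a + b) = NN p a + p ^ a * NN p b := by
  simp only [NN, Finset.sum_range_add, Finset.mul_sum, pow_add]

lemma NN_le (p n : ℕ) (hp : 2 ≤ p) : (p - 2) * NN p n ≤ p ^ n := by
  have := NN_mul p n
  obtain ⟨a, rfl⟩ := Nat.exists_eq_add_of_le hp
  simp only [Nat.add_sub_cancel_left]
  nlinarith

/-- the part of `G` in residue class `b` of exponents modulo `M` -/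
noncomputable def rho {F : Type*} [Field F] (M b : ℕ) (G : F[X]) : F[X] :=
  ∑ f ∈ Finset.range (G.natDegree + 1), if f % M = b then C (G.coeff f) * X ^ (f - b) else 0

lemma rho_natDegree {F : Type*} [Field F] (M b : ℕ) (G : F[X]) :
    (rho M b G).natDegree ≤ G.natDegree := by
  refine natDegree_sum_le_of_forall_le _ _ fun f hf => ?_
  rw [Finset.mem_range] at hf
  split_ifs
  · exact (natDegree_C_mul_X_pow_le _ _).trans (by omega)
  · simp

lemma rho_spec {F : Type*} [Field F] {Q : Type*} [CommRing Q] (π : F[X] →+* Q) (x0 : F) (M : ℕ)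
    (hM : 0 < M) (hπ : π X ^ M = π (C (x0 ^ M))) (G : F[X]) :
    π G = ∑ b : Fin M, π X ^ (b : ℕ) * π (C ((rho M b G).eval x0)) := by
  conv_lhs => rw [G.as_sum_range_C_mul_X_pow]
  rw [map_sum]
  simp only [rho, eval_finsetSum, map_sum, Finset.mul_sum]
  rw [Finset.sum_comm]
  refine Finset.sum_congr rfl fun f _ => ?_
  rw [Finset.sum_eq_single (⟨f % M, Nat.mod_lt _ hM⟩ : Fin M)]
  · simp only [if_true, eval_mul, eval_C, eval_pow, eval_X, map_mul, map_pow]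
    have h1 : f - f % M = M * (f / M) := by
      have := Nat.mod_add_div f M; omega
    rw [h1, pow_mul (π (C x0)), ← map_pow π (C x0), ← C_pow, ← hπ, ← pow_mul]
    conv_lhs => rw [← Nat.mod_add_div f M, pow_add]
    rw [Nat.mod_add_div f M]
    ring
  · intro b _ hb
    rw [if_neg]
    · simp
    · intro h; exact hb (Fin.ext h.symm)
  · simp

lemma stepanov_core {F : Type*} [Field F] [DecidableEq F] {p k μ : ℕ} [hp : Fact p.Prime]
    [CharP F p] {m : ℕ}
    (t : Fin m → F) (htp : ∀ i, t i ^ p = t i) (hinj : Function.Injective t)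
    (hF : ∀ x : F, x ^ p ^ k = x) (z : Fin m → F) (hz : ∀ i, z i ≠ 0)
    (T : Finset F) (hT : ∀ x ∈ T, ∀ i, (x - t i) ^ NN p k = z i)
    (hμ : μ ≤ k) (A D : ℕ) (hD : 1 ≤ D)
    (hDq : D * (p + 1 + m * p) ^ ((p - 1) ^ m) < p ^ k)
    (hcount : p ^ μ * (A + D + m * p ^ μ) < A * D * (p - 1) ^ m) :
    T.card * p ^ μ ≤ p ^ k * (A + m) := by
  classical
  have hp2 := hp.out.two_le
  set M := p ^ μ with hMdef
  have hM : 0 < M := pow_pos hp.out.pos _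
  set Y := A + D + m * M with hY
  let ι := Fin A × Fin D × (Fin m → Fin (p - 1))
  let jv : (Fin m → Fin (p - 1)) → (Fin m → ℕ) := fun j i => j i
  let jc : (Fin m → Fin (p - 1)) → (Fin m → ℕ) := fun j i => p - 2 - j i
  let W : ι → ℕ → F[X] := fun v b => C (∏ i, z i ^ (v.2.2 i : ℕ)) *
    (X ^ (v.1 : ℕ) * H t (jc v.2.2) ^ NN p μ *
      rho M b (X ^ (v.2.1 : ℕ) * H t (jv v.2.2) ^ NN p μ))
  have hW : ∀ v b, (W v b).natDegree < Y := by
    intro v b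
    refine lt_of_le_of_lt (natDegree_C_mul_le _ _) ?_
    refine lt_of_le_of_lt natDegree_mul_le ?_
    refine lt_of_le_of_lt (add_le_add natDegree_mul_le (rho_natDegree _ _ _)) ?_
    refine lt_of_le_of_lt (add_le_add le_rfl natDegree_mul_le) ?_
    rw [natDegree_X_pow, natDegree_X_pow, natDegree_pow, natDegree_pow, H_natDegree, H_natDegree]
    have h1 : ∑ i, jc v.2.2 i + ∑ i, jv v.2.2 i = m * (p - 2) := by
      rw [← Finset.sum_add_distrib]
      rw [Finset.sum_congr rfl (g := fun _ => p - 2)]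
      · simp
      · intro i _
        have := (v.2.2 i).2
        simp only [jc, jv]; omega
    have h2 := v.1.2
    have h3 := v.2.1.2
    have h4 : NN p μ * ∑ i, jc v.2.2 i + NN p μ * ∑ i, jv v.2.2 i ≤ m * M := by
      rw [← mul_add, h1]
      calc _ = m * ((p - 2) * NN p μ) := by ring
        _ ≤ _ := Nat.mul_le_mul_left _ (NN_le p μ hp2)
    omega
  let mat : Matrix (Fin M × Fin Y) ι F := fun by' v => (W v by'.1).coeff by'.2
  obtain ⟨u, hu, hu0⟩ : ∃ u : ι → F, mat.mulVecLin u = 0 ∧ u ≠ 0 := by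
    have := LinearMap.ker_ne_bot_of_finrank_lt (f := mat.mulVecLin) (by
      simp only [Module.finrank_fintype_fun_eq_card, ι, Fintype.card_prod, Fintype.card_fin,
        Fintype.card_fun]
      rw [← mul_assoc]; exact hcount)
    obtain ⟨u, hu, hu0⟩ := (Submodule.ne_bot_iff _).mp this
    exact ⟨u, hu, hu0⟩
  have hW0 : ∀ b : Fin M, ∑ v, C (u v) * W v b = 0 := by
    intro b
    ext y
    rw [finsetSum_coeff, coeff_zero]
    by_cases hy : y < Y
    · have := congrFun hu (b, ⟨y, hy⟩)
      simp only [mat, Pi.zero_apply] at this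
      rw [← this]
      refine Finset.sum_congr rfl fun v _ => ?_
      rw [coeff_C_mul, mul_comm]
    · refine Finset.sum_eq_zero fun v _ => ?_
      rw [coeff_C_mul, coeff_eq_zero_of_natDegree_lt (lt_of_lt_of_le (hW v b) (not_lt.mp hy)),
        mul_zero]
  let P : F[X] := ∑ v : ι, C (u v) * X ^ (p ^ k * v.1 + v.2.1 : ℕ) * H t (jv v.2.2) ^ NN p k
  -- P is non-zero
  have hP : P ≠ 0 := by
    intro hP0
    have jinj : Function.Injective jv := by
      intro a b hab
      ext i
      exact congrFun hab i
    let c0 : (Fin m → Fin (p - 1)) → F[X][X] := fun j =>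
      ∑ a : Fin A, C (∑ e : Fin D, C (u (a, e, j)) * X ^ (e : ℕ)) * X ^ (a : ℕ)
    let c : (Fin m → ℕ) → F[X][X] := fun j => if h : ∃ j', jv j' = j then c0 h.choose else 0
    have hcc : ∀ j, c (jv j) = c0 j := by
      intro j
      have h : ∃ j', jv j' = jv j := ⟨j, rfl⟩
      simp only [c, dif_pos h]
      rw [jinj h.choose_spec]
    have hcoef : ∀ j (a : Fin A), (c0 j).coeff a = ∑ e : Fin D, C (u (a, e, j)) * X ^ (e : ℕ) := by
      intro j a
      simp only [c0, finsetSum_coeff, coeff_C_mul_X_pow]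
      rw [Finset.sum_eq_single a]
      · simp
      · intro b _ hb
        rw [if_neg]
        intro h; exact hb (Fin.ext h.symm)
      · simp
    have hcard : (Finset.univ.image jv).card = (p - 1) ^ m := by
      rw [Finset.card_image_of_injective _ jinj]; simp
    have hind := indep (N := NN p k) t htp hinj (NN_mul p k) (Finset.univ.image jv) (by
      intro j hj i
      obtain ⟨j', _, rfl⟩ := Finset.mem_image.mp hj
      exact (j' i).2) D hD (by rw [hcard]; exact hDq) c (by
      intro j hj
      obtain ⟨j', _, rfl⟩ := Finset.mem_image.mp hj
      rw [hcc]
      intro n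
      simp only [c0, finsetSum_coeff, coeff_C_mul_X_pow]
      refine natDegree_sum_le_of_forall_le _ _ fun a _ => ?_
      split_ifs
      · refine natDegree_sum_le_of_forall_le _ _ fun e _ => ?_
        exact (natDegree_C_mul_X_pow_le _ _).trans e.2.le
      · simp) (by
      rw [Finset.sum_image (fun a _ b _ h => jinj h), ← hP0]
      simp only [hcc, c0, P, ι]
      rw [Fintype.sum_prod_type]
      simp only [Fintype.sum_prod_type, eval_finsetSum, eval_mul, eval_C, eval_pow, eval_X,
        Finset.sum_mul]
      rw [Finset.sum_comm]
      refine Finset.sum_congr rfl fun a _ => ?_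
      rw [Finset.sum_comm]
      refine Finset.sum_congr rfl fun e _ => ?_
      refine Finset.sum_congr rfl fun j _ => ?_
      rw [pow_add, pow_mul]; ring)
    apply hu0
    ext ⟨a, e, j⟩
    have h1 := hind (jv j) (Finset.mem_image_of_mem _ (Finset.mem_univ _))
    rw [hcc] at h1
    have h2 := hcoef j a
    rw [h1, coeff_zero] at h2
    have h3 := congrArg (fun g => g.coeff (e : ℕ)) h2
    simp only [coeff_zero, finsetSum_coeff, coeff_C_mul_X_pow] at h3
    rw [Finset.sum_eq_single e] at h3
    · simpa using h3.symm
    · intro b _ hb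
      rw [if_neg]
      intro h; exact hb (Fin.ext h.symm)
    · simp
  -- P has small degree
  have hdeg : P.natDegree ≤ p ^ k * (A + m) := by
    refine natDegree_sum_le_of_forall_le _ _ fun v _ => ?_
    refine natDegree_mul_le.trans ?_
    refine (add_le_add (natDegree_C_mul_X_pow_le _ _) le_rfl).trans ?_
    rw [natDegree_pow, H_natDegree]
    have h2 := v.1.2
    have h3 := v.2.1.2
    have h4 : NN p k * ∑ i, jv v.2.2 i ≤ p ^ k * m := by
      calc _ ≤ NN p k * (m * (p - 2)) := by
            refine Nat.mul_le_mul_left _ ?_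
            refine (Finset.sum_le_card_nsmul _ _ (p - 2) fun i _ => ?_).trans (by simp)
            have := (v.2.2 i).2
            simp only [jv]; omega
        _ = ((p - 2) * NN p k) * m := by ring
        _ ≤ _ := Nat.mul_le_mul_right _ (NN_le p k hp2)
    have h5 : D < p ^ k := lt_of_le_of_lt (Nat.le_mul_of_pos_right _ (by positivity)) hDq
    have h6 : p ^ k * (v.1 + 1) ≤ p ^ k * A := Nat.mul_le_mul_left _ h2
    rw [mul_add] at h6 ⊢
    omega
  -- P vanishes to high order
  have hvan : ∀ x0 ∈ T, (X - C x0) ^ M ∣ P := by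
    intro x0 hx0
    obtain ⟨Q, instQ, π, hπ⟩ : ∃ (Q : Type _) (_ : CommRing Q) (π : F[X] →+* Q),
        ∀ g, π g = 0 ↔ (X - C x0) ^ M ∣ g :=
      ⟨_, _, Ideal.Quotient.mk (Ideal.span {(X - C x0) ^ M}), fun g => by
        rw [← Ideal.mem_span_singleton, Ideal.Quotient.eq_zero_iff_mem]⟩
    rw [← hπ]
    have hne : ∀ i, x0 - t i ≠ 0 := by
      intro i h0
      have := hT x0 hx0 i
      rw [h0] at this
      rcases Nat.eq_zero_or_pos (NN p k) with h | h
      · have h1 := NN_mul p k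
        rw [h] at h1
        have h2 : D < p ^ k := lt_of_le_of_lt (Nat.le_mul_of_pos_right _ (by positivity)) hDq
        omega
      · rw [zero_pow h.ne'] at this
        exact hz i this.symm
    have hfrob : ∀ s : F, (X - C s) ^ M = X ^ M - C (s ^ M) := by
      intro s
      rw [hMdef, sub_pow_char_pow, C_pow]
    have hX : π X ^ M = π (C (x0 ^ M)) := by
      rw [← map_pow, ← sub_eq_zero, ← map_sub, ← hfrob, hπ]
    obtain ⟨l, hl⟩ := Nat.exists_eq_add_of_le hμ
    have hXq : ∀ a : ℕ, π X ^ (p ^ k * a) = π (C (x0 ^ a)) := by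
      intro a
      rw [hl, pow_add, mul_assoc, pow_mul, ← hMdef, hX, ← map_pow, ← C_pow, ← pow_mul,
        ← mul_assoc, hMdef, ← pow_add, ← hl, pow_mul, hF]
    have hHM : ∀ j, π (H t j) ^ M = π (C ((H t j).eval x0 ^ M)) := by
      intro j
      rw [H, eval_prod, map_prod, ← Finset.prod_pow, ← Finset.prod_pow, map_prod, map_prod]
      refine Finset.prod_congr rfl fun i _ => ?_
      rw [← map_pow, ← pow_mul, mul_comm, pow_mul, hfrob, map_pow, map_sub, map_pow, hX, ← map_sub,
        ← C_sub]
      simp only [eval_pow, eval_sub, eval_X, eval_C]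
      rw [← map_pow, ← C_pow]
      congr 2
      rw [← pow_mul, mul_comm (j i) M, pow_mul, hMdef, sub_pow_char_pow]
    have hHN : ∀ j, π (H t j) ^ NN p k =
        π (H t j) ^ NN p μ * π (C ((H t j).eval x0 ^ (M * NN p l))) := by
      intro j
      rw [hl, NN_add, pow_add, pow_mul (π (H t j)), ← hMdef, hHM, ← map_pow π (C _), ← C_pow, ← pow_mul]
    set κ := (H t (fun _ => p - 2)).eval x0 ^ NN p μ with hκ
    have hevne : ∀ j, (H t j).eval x0 ≠ 0 := by
      intro j
      rw [H, eval_prod, Finset.prod_ne_zero_iff]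
      intro i _
      simp only [eval_pow, eval_sub, eval_X, eval_C]
      exact pow_ne_zero _ (hne i)
    have hκ0 : κ ≠ 0 := pow_ne_zero _ (hevne _)
    have hκj : ∀ j : Fin m → Fin (p - 1), κ * (H t (jv j)).eval x0 ^ (M * NN p l) =
        (∏ i, z i ^ (j i : ℕ)) * (H t (jc j)).eval x0 ^ NN p μ := by
      intro j
      have e1 : H t (fun _ => p - 2) = H t (jv j) * H t (jc j) := by
        rw [H_mul]
        congr 1
        ext i
        have := (j i).2
        simp only [Pi.add_apply, jv, jc]; omega
      have e2 : ∏ i, z i ^ (j i : ℕ) = (H t (jv j)).eval x0 ^ NN p k := by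
        rw [H, eval_prod, ← Finset.prod_pow]
        refine Finset.prod_congr rfl fun i _ => ?_
        simp only [eval_pow, eval_sub, eval_X, eval_C]
        rw [← hT x0 hx0 i, ← pow_mul, ← pow_mul, mul_comm]
      rw [hκ, e1, e2, eval_mul, mul_pow, hl, NN_add, pow_add]
      ring
    have hunit : IsUnit (π (C κ)) := ((isUnit_C.mpr (isUnit_iff_ne_zero.mpr hκ0))).map π
    apply hunit.mul_left_cancel
    rw [mul_zero]
    have hmain : π (C κ) * π P = ∑ b : Fin M, π X ^ (b : ℕ) * π (C ((∑ v, C (u v) * W v b).eval x0)) := by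
      simp only [P, eval_finsetSum, map_sum, Finset.mul_sum]
      rw [Finset.sum_comm]
      refine Finset.sum_congr rfl fun v _ => ?_
      have h1 := rho_spec π x0 M hM hX (X ^ (v.2.1 : ℕ) * H t (jv v.2.2) ^ NN p μ)
      simp only [W, eval_mul, eval_C, eval_pow, eval_X, map_mul, map_pow]
      have h2 : ∀ b : Fin M, π X ^ (b : ℕ) * (π (C (u v)) * (π (C (∏ i, z i ^ (v.2.2 i : ℕ))) *
          (π (C x0) ^ (v.1 : ℕ) * π (C (eval x0 (H t (jc v.2.2)))) ^ NN p μ *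
          π (C (eval x0 (rho M b (X ^ (v.2.1 : ℕ) * H t (jv v.2.2) ^ NN p μ)))))))
          = (π (C (u v)) * (π (C (∏ i, z i ^ (v.2.2 i : ℕ))) *
          (π (C x0) ^ (v.1 : ℕ) * π (C (eval x0 (H t (jc v.2.2)))) ^ NN p μ))) *
          (π X ^ (b : ℕ) * π (C (eval x0 (rho M b (X ^ (v.2.1 : ℕ) * H t (jv v.2.2) ^ NN p μ))))) := by
        intro b; ring
      simp only [map_prod, map_pow] at h2 ⊢
      rw [Finset.sum_congr rfl (fun b _ => h2 b), ← Finset.mul_sum, ← h1, pow_add, hXq, hHN]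
      have h3 := congrArg (fun y => π (C y)) (hκj v.2.2)
      simp only [map_mul, map_pow, map_prod] at h3 ⊢
      linear_combination (π (C (u v)) * π (C x0) ^ (v.1 : ℕ) * π X ^ (v.2.1 : ℕ) *
        π (H t (jv v.2.2)) ^ NN p μ) * h3
    rw [hmain]
    refine Finset.sum_eq_zero fun b _ => ?_
    rw [hW0]; simp
  have hprod : ∏ x ∈ T, (X - C x) ^ M ∣ P := by
    refine Finset.prod_dvd_of_coprime ?_ hvan
    intro a _ b _ hab
    exact (pairwise_coprime_X_sub_C Function.injective_id hab).pow
  have h1 := natDegree_le_of_dvd hprod hP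
  rw [natDegree_prod _ _ (fun i _ => pow_ne_zero _ (X_sub_C_ne_zero _))] at h1
  simp at h1
  exact h1.trans hdeg

/-- the bound of Stepanov -/
lemma stepanov (p m : ℕ) [hp : Fact p.Prime] : ∃ B k0 : ℕ, ∀ k, k0 ≤ k →
    ∀ (F : Type) [Field F] [CharP F p] (t : Fin m → F) (_ : ∀ i, t i ^ p = t i)
    (_ : Function.Injective t) (_ : ∀ x : F, x ^ p ^ k = x) (z : Fin m → F) (_ : ∀ i, z i ≠ 0)
    (T : Finset F) (_ : ∀ x ∈ T, ∀ i, (x - t i) ^ NN p k = z i),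
    (T.card : ℝ) ≤ (p : ℝ) ^ k / ((p : ℝ) - 1) ^ m + B * √((p : ℝ) ^ k) := by
  classical
  have hp2 := hp.out.two_le
  set w := (p - 1) ^ m with hw
  have hw1 : 1 ≤ w := Nat.one_le_pow _ _ (by omega)
  obtain ⟨s, hs⟩ : ∃ s, (p + 1 + m * p) ^ w < p ^ s := pow_unbounded_of_one_lt _ (by omega)
  set c1 := (2 + m) * p ^ s + 1 with hc1
  set c0 := 1 + c1 with hc0
  refine ⟨p * (c0 + m), 2 * (s + c0) + 1, ?_⟩
  intro k hk F _ _ t htp hinj hF z hz T hT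
  set μ := k / 2 with hμ
  set M := p ^ μ with hM
  have hMc : c0 ≤ M := by
    have h1 : c0 ≤ μ := by omega
    exact h1.trans (Nat.lt_pow_self (by omega)).le
  have hMM : M * M ≤ p ^ k := by
    rw [hM, ← pow_add]; exact Nat.pow_le_pow_right (by omega) (by omega)
  have hMM2 : p ^ k ≤ M * M * p := by
    rw [hM, ← pow_add, ← pow_succ]; exact Nat.pow_le_pow_right (by omega) (by omega)
  set D := p ^ (k - s) with hDdef
  have hD1 : 1 ≤ D := Nat.one_le_pow _ _ (by omega)
  have hDs : D * p ^ s = p ^ k := by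
    rw [hDdef, ← pow_add]; congr 1; omega
  set A := M / w + c0 with hA
  have hAw : M + c1 ≤ A * w := by
    have h1 : M < (M / w + 1) * w := by
      have := Nat.lt_mul_div_succ M (show 0 < w by omega)
      rw [mul_comm]; exact this
    have h2 : c1 ≤ c1 * w := Nat.le_mul_of_pos_right _ hw1
    have h3 : A * w = (M / w + 1) * w + c1 * w := by rw [hA, hc0]; ring
    omega
  have hAM : A ≤ 2 * M := by
    have := Nat.div_le_self M w
    omega
  have hcore := stepanov_core (μ := μ) t htp hinj hF z hz T hT (by omega) A D hD1 (by
      rw [← hDs]; exact Nat.mul_lt_mul_of_pos_left hs hD1) (by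
      rw [← hM, ← hw]
      have h1 : (2 + m) * (M * M) ≤ (2 + m) * p ^ s * D := by
        rw [mul_assoc, mul_comm (p ^ s)]
        exact Nat.mul_le_mul_left _ (hDs ▸ hMM)
      calc M * (A + D + m * M) ≤ M * (2 * M + D + m * M) :=
            Nat.mul_le_mul_left _ (by omega)
        _ = (2 + m) * (M * M) + M * D := by ring
        _ ≤ (2 + m) * p ^ s * D + M * D := by omega
        _ < (M + c1) * D := by rw [hc1]; nlinarith
        _ ≤ (A * w) * D := Nat.mul_le_mul_right _ hAw
        _ = A * D * w := by ring)
  rw [← hM] at hcore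
  have hMpos : (0 : ℝ) < M := by exact_mod_cast pow_pos hp.out.pos _
  have hwR : ((p : ℝ) - 1) ^ m = w := by
    rw [hw]; push_cast [Nat.cast_sub hp.out.one_le]; rfl
  have hwpos : (0 : ℝ) < w := by exact_mod_cast hw1
  have hAR : (A : ℝ) ≤ M / w + c0 := by
    rw [hA]; push_cast
    gcongr
    exact Nat.cast_div_le
  have hcoreR : (T.card : ℝ) * M ≤ (p : ℝ) ^ k * (A + m) := by exact_mod_cast hcore
  rw [hwR]
  have hq : (0 : ℝ) ≤ (p : ℝ) ^ k := by positivity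
  have hsq : (p : ℝ) ^ k / M ≤ p * √((p : ℝ) ^ k) := by
    have h1 : (M : ℝ) ≤ √((p : ℝ) ^ k) := by
      apply Real.le_sqrt_of_sq_le
      rw [sq]; exact_mod_cast hMM
    rw [div_le_iff₀ hMpos]
    have h2 : (p : ℝ) ^ k ≤ M * M * p := by exact_mod_cast hMM2
    nlinarith [mul_nonneg (mul_nonneg (Nat.cast_nonneg (α := ℝ) p) hMpos.le) (sub_nonneg.mpr h1)]
  calc (T.card : ℝ) ≤ (p : ℝ) ^ k * (A + m) / M := by rwa [le_div_iff₀ hMpos]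
    _ ≤ (p : ℝ) ^ k * (M / w + c0 + m) / M := by gcongr
    _ = (p : ℝ) ^ k / w + (p : ℝ) ^ k / M * (c0 + m) := by field_simp; ring
    _ ≤ (p : ℝ) ^ k / w + p * √((p : ℝ) ^ k) * (c0 + m) := by gcongr
    _ = _ := by push_cast; ring

end Stp
end

section
open Polynomial

namespace Stp

/-- character sum over an extension field -/
noncomputable def SS {p m : ℕ} [Fact p.Prime] (χ : Fin m → MulChar (ZMod p) ℂ) (t : Fin m → ZMod p)
    (F : Type) [Field F] [Fintype F] [Algebra (ZMod p) F] : ℂ :=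
  ∑ x : F, ∏ i, χ i (Algebra.norm (ZMod p) (algebraMap (ZMod p) F (t i) - x))

lemma chi_le {p : ℕ} [Fact p.Prime] (χ : MulChar (ZMod p) ℂ) (a : ZMod p) : ‖χ a‖ ≤ 1 :=
  DirichletCharacter.norm_le_one χ a

lemma prod_chi_le {p m : ℕ} [Fact p.Prime] (χ : Fin m → MulChar (ZMod p) ℂ) (a : Fin m → ZMod p) :
    ‖∏ i, χ i (a i)‖ ≤ 1 := by
  rw [norm_prod]
  exact Finset.prod_le_one (fun _ _ => norm_nonneg _) fun i _ => chi_le _ _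

lemma norm_pow_NN {p k : ℕ} [hp : Fact p.Prime] (F : Type) [Field F] [Fintype F]
    [Algebra (ZMod p) F] (hF : Fintype.card F = p ^ k) (x : F) :
    algebraMap (ZMod p) F (Algebra.norm (ZMod p) x) = x ^ NN p k := by
  have h1 := FiniteField.algebraMap_norm_eq_pow_sum (ZMod p) F (x := x)
  have h2 : Module.finrank (ZMod p) F = k := by
    have := Module.card_eq_pow_finrank (K := ZMod p) (V := F)
    rw [hF, ZMod.card] at this
    exact (Nat.pow_right_injective hp.out.two_le this).symm
  rw [h1, NN, h2]
  simp

lemma SS_bound {p m : ℕ} [hp : Fact p.Prime] (χ : Fin m → MulChar (ZMod p) ℂ)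
    (t : Fin m → ZMod p) (ht : Function.Injective t) (hχ : ∃ i, χ i ≠ 1) :
    ∃ B : ℝ, 0 ≤ B ∧ ∀ k : ℕ, ∀ (F : Type) [Field F] [Fintype F] [Algebra (ZMod p) F],
      Fintype.card F = p ^ k → ‖SS χ t F‖ ≤ B * √((p : ℝ) ^ k) := by
  classical
  obtain ⟨B, k0, hB⟩ := stepanov p m
  have hp1 : (1 : ℝ) ≤ p := by exact_mod_cast hp.out.one_le
  have hp2 : (2 : ℝ) ≤ p := by exact_mod_cast hp.out.two_le
  set w : ℝ := ((p : ℝ) - 1) ^ m with hw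
  have hw0 : 0 < w := pow_pos (by linarith) _
  refine ⟨(p : ℝ) ^ k0 + 2 * w * B + m, by positivity, ?_⟩
  intro k F _ _ _ hF
  have hsq : 1 ≤ √((p : ℝ) ^ k) := Real.one_le_sqrt.mpr (one_le_pow₀ hp1)
  rcases lt_or_ge k k0 with hk | hk
  · have h1 : ‖SS χ t F‖ ≤ (p : ℝ) ^ k := by
      refine (norm_sum_le _ _).trans ?_
      refine (Finset.sum_le_card_nsmul _ _ 1 fun x _ => prod_chi_le χ _).trans ?_
      rw [Finset.card_univ, hF]; simp
    have h2 : (p : ℝ) ^ k ≤ (p : ℝ) ^ k0 := pow_le_pow_right₀ hp1 hk.le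
    have h3 : 0 ≤ 2 * w * B + m := by positivity
    have h4 : ‖SS χ t F‖ ≤ (p : ℝ) ^ k0 + 2 * w * B + m := by linarith
    exact h4.trans (le_mul_of_one_le_right (by positivity) hsq)
  -- main case
  haveI : CharP F p := charP_of_injective_algebraMap (algebraMap (ZMod p) F).injective p
  have hinjA := (algebraMap (ZMod p) F).injective
  let tF : Fin m → F := fun i => algebraMap (ZMod p) F (t i)
  have htF : Function.Injective tF := hinjA.comp ht
  have htp : ∀ i, tF i ^ p = tF i := fun i => by
    simp only [tF]; rw [← map_pow, ZMod.pow_card]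
  have hFq : ∀ x : F, x ^ p ^ k = x := fun x => by rw [← hF]; exact FiniteField.pow_card x
  let T : (Fin m → (ZMod p)ˣ) → Finset F := fun z =>
    Finset.univ.filter fun x => ∀ i, Algebra.norm (ZMod p) (tF i - x) = z i
  set u : ℝ := B * √((p : ℝ) ^ k) with hu
  have hu0 : 0 ≤ u := by positivity
  have hT : ∀ z, ((T z).card : ℝ) ≤ (p : ℝ) ^ k / w + u := by
    intro z
    refine hB k hk F tF htp htF hFq (fun i => (-1) ^ NN p k * algebraMap (ZMod p) F (z i)) ?_
      (T z) ?_
    · intro i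
      refine mul_ne_zero (pow_ne_zero _ (neg_ne_zero.mpr one_ne_zero)) ?_
      rw [Ne, map_eq_zero]
      exact (z i).ne_zero
    · intro x hx i
      have := (Finset.mem_filter.mp hx).2 i
      rw [← this, norm_pow_NN F hF, ← mul_pow]
      congr 1; ring
  have hcardz : (Fintype.card (Fin m → (ZMod p)ˣ) : ℝ) = w := by
    rw [Fintype.card_fun, Fintype.card_fin, ZMod.card_units, hw]
    push_cast [Nat.cast_sub hp.out.one_le]; rfl
  have hpt : ∀ x : F, ∏ i, χ i (Algebra.norm (ZMod p) (algebraMap (ZMod p) F (t i) - x)) =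
      ∑ z : Fin m → (ZMod p)ˣ, if x ∈ T z then ∏ i, χ i (z i) else 0 := by
    intro x
    by_cases h : ∀ i, Algebra.norm (ZMod p) (tF i - x) ≠ 0
    · rw [Finset.sum_eq_single (fun i => Units.mk0 _ (h i))]
      · rw [if_pos]
        · simp [tF]
        · exact Finset.mem_filter.mpr ⟨Finset.mem_univ _, fun i => (Units.val_mk0 _).symm⟩
      · intro z _ hz
        rw [if_neg]
        intro hx
        apply hz
        ext i
        simp [← (Finset.mem_filter.mp hx).2 i]
      · simp
    · push Not at h
      obtain ⟨i, hi⟩ := h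
      rw [Finset.prod_eq_zero (Finset.mem_univ i), Finset.sum_eq_zero]
      · intro z _
        rw [if_neg]
        intro hx
        have := (Finset.mem_filter.mp hx).2 i
        rw [hi] at this
        exact (z i).ne_zero this.symm
      · simp only [tF] at hi
        rw [hi]; exact MulChar.map_zero _
  have hSS : SS χ t F = ∑ z : Fin m → (ZMod p)ˣ, ((T z).card : ℂ) * ∏ i, χ i (z i) := by
    rw [SS, Finset.sum_congr rfl (fun x _ => hpt x), Finset.sum_comm]
    refine Finset.sum_congr rfl fun z _ => ?_
    rw [← Finset.sum_filter, Finset.sum_const, nsmul_eq_mul]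
    simp
  have hchar0 : ∑ z : Fin m → (ZMod p)ˣ, ∏ i, χ i (z i) = 0 := by
    rw [← Fintype.prod_sum (fun i (a : (ZMod p)ˣ) => χ i a)]
    obtain ⟨i, hi⟩ := hχ
    refine Finset.prod_eq_zero (Finset.mem_univ i) ?_
    obtain ⟨a, ha⟩ := MulChar.ne_one_iff.mp hi
    have h1 : χ i a * ∑ b : (ZMod p)ˣ, χ i b = ∑ b : (ZMod p)ˣ, χ i b := by
      rw [Finset.mul_sum]
      refine Fintype.sum_equiv (Equiv.mulLeft a) _ _ fun b => ?_
      simp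
    have h2 : (χ i a - 1) * ∑ b : (ZMod p)ˣ, χ i b = 0 := by linear_combination h1
    exact (mul_eq_zero.mp h2).resolve_left (sub_ne_zero.mpr ha)
  have hsumT : (p : ℝ) ^ k - m ≤ ∑ z, ((T z).card : ℝ) := by
    have h1 : (Finset.univ : Finset F) ⊆ Finset.univ.biUnion T ∪ Finset.univ.image tF := by
      intro x _
      by_cases h : ∀ i, Algebra.norm (ZMod p) (tF i - x) ≠ 0
      · refine Finset.mem_union_left _ (Finset.mem_biUnion.mpr
          ⟨fun i => Units.mk0 _ (h i), Finset.mem_univ _, ?_⟩)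
        exact Finset.mem_filter.mpr ⟨Finset.mem_univ _, fun i => (Units.val_mk0 _).symm⟩
      · push Not at h
        obtain ⟨i, hi⟩ := h
        refine Finset.mem_union_right _ (Finset.mem_image.mpr ⟨i, Finset.mem_univ _, ?_⟩)
        rw [Algebra.norm_eq_zero_iff] at hi
        exact sub_eq_zero.mp hi
    have h2 := (Finset.card_le_card h1).trans (Finset.card_union_le _ _)
    have h3 : (Finset.univ.biUnion T).card ≤ ∑ z, (T z).card := Finset.card_biUnion_le
    have h4 : (Finset.univ.image tF).card ≤ m := Finset.card_image_le.trans (by simp)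
    rw [Finset.card_univ, hF] at h2
    have h5 : p ^ k ≤ ∑ z, (T z).card + m := by omega
    have h6 : (p : ℝ) ^ k ≤ ∑ z, ((T z).card : ℝ) + m := by exact_mod_cast h5
    linarith
  have hSS2 : SS χ t F = ∑ z : Fin m → (ZMod p)ˣ,
      ((((T z).card : ℝ) - (p : ℝ) ^ k / w : ℝ) : ℂ) * ∏ i, χ i (z i) := by
    have : ∀ z : Fin m → (ZMod p)ˣ, ((((T z).card : ℝ) - (p : ℝ) ^ k / w : ℝ) : ℂ) * ∏ i, χ i (z i)
      = ((T z).card : ℂ) * ∏ i, χ i (z i) - (((p : ℝ) ^ k / w : ℝ) : ℂ) * ∏ i, χ i (z i) := by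
      intro z; push_cast; ring
    rw [Finset.sum_congr rfl (fun z _ => this z), Finset.sum_sub_distrib, ← Finset.mul_sum, hchar0,
      mul_zero, sub_zero, hSS]
  have h7 : ‖SS χ t F‖ ≤ ∑ z : Fin m → (ZMod p)ˣ, (2 * u - (((T z).card : ℝ) - (p : ℝ) ^ k / w)) := by
    rw [hSS2]
    refine (norm_sum_le _ _).trans (Finset.sum_le_sum fun z _ => ?_)
    rw [norm_mul, Complex.norm_real, Real.norm_eq_abs]
    have h1 := prod_chi_le χ (fun i => (z i : ZMod p))
    have h2 : |((T z).card : ℝ) - (p : ℝ) ^ k / w| ≤ 2 * u - (((T z).card : ℝ) - (p : ℝ) ^ k / w) := by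
      have := hT z
      rw [abs_le]; constructor <;> linarith
    exact (mul_le_of_le_one_right (abs_nonneg _) h1).trans h2
  have h8 : ∑ z : Fin m → (ZMod p)ˣ, (2 * u - (((T z).card : ℝ) - (p : ℝ) ^ k / w)) =
      2 * w * u - ∑ z, ((T z).card : ℝ) + (p : ℝ) ^ k := by
    rw [Finset.sum_sub_distrib, Finset.sum_sub_distrib, Finset.sum_const, Finset.sum_const,
      Finset.card_univ, nsmul_eq_mul, nsmul_eq_mul, hcardz]
    field_simp
    ring
  rw [h8] at h7
  have h9 : 0 ≤ (p : ℝ) ^ k0 := by positivity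
  have h10 : (0 : ℝ) ≤ m := by positivity
  rw [hu] at h7
  nlinarith

end Stp
end

section
open Polynomial

namespace Stp

lemma norm_sub_eq {K L : Type} [Field K] [Field L] [Algebra K L] [FiniteDimensional K L]
    (t : K) (x : L) : Algebra.norm K (algebraMap K L t - x) =
      ((minpoly K x).eval t) ^ (Module.finrank K L / (minpoly K x).natDegree) := by
  have hx : IsIntegral K x := IsIntegral.of_finite K x
  let E := IntermediateField.adjoin K {x}
  let y : E := algebraMap K E t - IntermediateField.AdjoinSimple.gen K x
  have hy : algebraMap K L t - x = algebraMap E L y := by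
    simp [y, E]
  have hfin : Module.finrank K E = (minpoly K x).natDegree := IntermediateField.adjoin.finrank hx
  have hmul := Module.finrank_mul_finrank K E L
  have hpos : 0 < (minpoly K x).natDegree := minpoly.natDegree_pos hx
  have hdiv : Module.finrank K L / (minpoly K x).natDegree = Module.finrank E L := by
    rw [← hmul, hfin]; exact Nat.mul_div_cancel_left _ hpos
  rw [hdiv, hy, ← Algebra.norm_norm (R := K) (S := E)]
  rw [Algebra.norm_algebraMap, map_pow]
  congr 1
  let pb := IntermediateField.adjoin.powerBasis hx
  have hgen : pb.gen = IntermediateField.AdjoinSimple.gen K x :=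
    IntermediateField.adjoin.powerBasis_gen hx
  have h2 := charpoly_leftMulMatrix pb
  rw [hgen] at h2
  rw [Algebra.norm_eq_matrix_det pb.basis]
  have h3 : minpoly K (IntermediateField.AdjoinSimple.gen K x) = minpoly K x :=
    IntermediateField.minpoly_gen K x
  rw [← h3, ← h2, Matrix.eval_charpoly, map_sub]
  congr 2
  rw [AlgHom.commutes]
  rfl

lemma card_minpoly_eq {p k : ℕ} [hp : Fact p.Prime] (F : Type) [Field F] [Fintype F]
    [Algebra (ZMod p) F] [DecidableEq (ZMod p)[X]] (hF : Fintype.card F = p ^ k)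
    (P : (ZMod p)[X]) (hP : Irreducible P) (hm : P.Monic)
    (hd : P.natDegree ∣ k) :
    (Finset.univ.filter fun x : F => minpoly (ZMod p) x = P).card = P.natDegree := by
  classical
  have h1 : P ∣ X ^ p ^ k - X := by
    have := (hP.natDegree_dvd_iff_dvd_X_pow_card_pow_sub_X (n := k)).mp hd
    simpa using this
  have hs : (P.map (algebraMap (ZMod p) F)).Splits := by
    have h2 : ((X ^ p ^ k - X : (ZMod p)[X]).map (algebraMap (ZMod p) F)).Splits := by
      rw [← hF]
      exact (FiniteField.isSplittingField_sub F (ZMod p)).splits'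
    refine h2.of_dvd ?_ (Polynomial.map_dvd _ h1)
    rw [← hF]
    simp only [Polynomial.map_sub, Polynomial.map_pow, Polynomial.map_X]
    exact FiniteField.X_pow_card_sub_X_ne_zero F Fintype.one_lt_card
  have hsep : P.Separable := PerfectField.separable_of_irreducible hP
  rw [← card_rootSet_eq_natDegree hsep hs, ← Set.toFinset_card]
  congr 1
  ext x
  rw [Finset.mem_filter, Set.mem_toFinset, mem_rootSet]
  constructor
  · rintro ⟨-, rfl⟩
    exact ⟨hP.ne_zero, minpoly.aeval _ _⟩
  · rintro ⟨-, h⟩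
    exact ⟨Finset.mem_univ _, (minpoly.eq_of_irreducible_of_monic hP h hm).symm⟩

/-- multiplicative function on polynomials -/
noncomputable def XX {p m : ℕ} (χ : Fin m → MulChar (ZMod p) ℂ) (t : Fin m → ZMod p)
    (g : (ZMod p)[X]) : ℂ := ∏ i, χ i (g.eval (t i))

lemma XX_mul {p m : ℕ} (χ : Fin m → MulChar (ZMod p) ℂ) (t : Fin m → ZMod p)
    (g h : (ZMod p)[X]) : XX χ t (g * h) = XX χ t g * XX χ t h := by
  simp [XX, Finset.prod_mul_distrib]

lemma XX_one {p m : ℕ} (χ : Fin m → MulChar (ZMod p) ℂ) (t : Fin m → ZMod p) :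
    XX χ t 1 = 1 := by
  simp [XX]

lemma XX_pow {p m : ℕ} (χ : Fin m → MulChar (ZMod p) ℂ) (t : Fin m → ZMod p)
    (g : (ZMod p)[X]) (n : ℕ) : XX χ t (g ^ n) = XX χ t g ^ n := by
  induction n with
  | zero => simp [XX_one]
  | succ n ih => rw [pow_succ, XX_mul, ih, pow_succ]

lemma Mon_finite (p d : ℕ) [Fact p.Prime] :
    {g : (ZMod p)[X] | g.Monic ∧ g.natDegree = d}.Finite := by
  have h : Set.InjOn (fun (g : (ZMod p)[X]) (i : Fin (d + 1)) => g.coeff i)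
      {g : (ZMod p)[X] | g.Monic ∧ g.natDegree = d} := by
    intro g hg g' hg' h
    ext n
    rcases lt_or_ge n (d + 1) with hn | hn
    · exact congrFun h ⟨n, hn⟩
    · rw [coeff_eq_zero_of_natDegree_lt (by rw [hg.2]; omega),
        coeff_eq_zero_of_natDegree_lt (by rw [hg'.2]; omega)]
  exact Set.Finite.of_finite_image (Set.toFinite _) h

/-- monic polynomials of degree d -/
noncomputable def Mon (p d : ℕ) [Fact p.Prime] : Finset (ZMod p)[X] := (Mon_finite p d).toFinset

lemma mem_Mon {p d : ℕ} [Fact p.Prime] {g : (ZMod p)[X]} :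
    g ∈ Mon p d ↔ g.Monic ∧ g.natDegree = d := by simp [Mon]

open Classical in
/-- monic irreducibles of degree at most D -/
noncomputable def Irr (p D : ℕ) [Fact p.Prime] : Finset (ZMod p)[X] :=
  ((Finset.range (D + 1)).biUnion (fun d => Mon p d)).filter Irreducible

lemma mem_Irr {p D : ℕ} [Fact p.Prime] {g : (ZMod p)[X]} :
    g ∈ Irr p D ↔ g.Monic ∧ Irreducible g ∧ g.natDegree ≤ D := by
  simp only [Irr, Finset.mem_filter, Finset.mem_biUnion, mem_Mon, Finset.mem_range]
  constructor
  · rintro ⟨⟨a, h1, h2, h3⟩, h4⟩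
    exact ⟨h2, h4, by omega⟩
  · rintro ⟨h1, h2, h3⟩
    exact ⟨⟨g.natDegree, by omega, h1, rfl⟩, h2⟩

lemma SS_eq {p m k : ℕ} [hp : Fact p.Prime] (χ : Fin m → MulChar (ZMod p) ℂ) (t : Fin m → ZMod p)
    (F : Type) [Field F] [Fintype F] [Algebra (ZMod p) F] (hF : Fintype.card F = p ^ k)
    (D : ℕ) (hD : k ≤ D) (hk : 0 < k) :
    SS χ t F = ∑ P ∈ Irr p D, if P.natDegree ∣ k then
      (P.natDegree : ℂ) * XX χ t P ^ (k / P.natDegree) else 0 := by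
  classical
  have hfr : Module.finrank (ZMod p) F = k := by
    have := Module.card_eq_pow_finrank (K := ZMod p) (V := F)
    rw [hF, ZMod.card] at this
    exact (Nat.pow_right_injective hp.out.two_le this).symm
  have hdeg : ∀ x : F, (minpoly (ZMod p) x).natDegree ∣ k := fun x => by
    rw [← hfr]; exact minpoly.degree_dvd (IsIntegral.of_finite _ x)
  rw [SS, ← Finset.sum_fiberwise_of_maps_to (s := Finset.univ) (t := Irr p D)
    (g := fun x : F => minpoly (ZMod p) x)]
  · refine Finset.sum_congr rfl fun P hP => ?_
    rw [mem_Irr] at hP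
    have hterm : ∀ x ∈ Finset.univ.filter (fun x : F => minpoly (ZMod p) x = P),
        ∏ i, χ i (Algebra.norm (ZMod p) (algebraMap (ZMod p) F (t i) - x)) =
          XX χ t P ^ (k / P.natDegree) := by
      intro x hx
      have hx := (Finset.mem_filter.mp hx).2
      simp only [norm_sub_eq, hfr, hx, map_pow, Finset.prod_pow, XX]
    rw [Finset.sum_congr rfl hterm, Finset.sum_const, nsmul_eq_mul]
    split_ifs with h
    · rw [card_minpoly_eq F hF P hP.2.1 hP.1 h]
    · rw [Finset.filter_eq_empty_iff.mpr]
      · simp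
      · rintro x - rfl
        exact h (hdeg x)
  · intro x _
    rw [mem_Irr]
    have hx := IsIntegral.of_finite (ZMod p) x
    exact ⟨minpoly.monic hx, minpoly.irreducible hx, (Nat.le_of_dvd hk (hdeg x)).trans hD⟩

end Stp
end

section
open Polynomial

namespace Stp

lemma deg_sum {p d : ℕ} [hp : Fact p.Prime] (g : (ZMod p)[X]) (hg : g ∈ Mon p d) [DecidableRel (α := (ZMod p)[X]) (· ∣ ·)] :
    d = ∑ P ∈ Irr p d, ∑ j ∈ Finset.Icc 1 d, if P ^ j ∣ g then P.natDegree else 0 := by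
  classical
  rw [mem_Mon] at hg
  obtain ⟨hm, hd⟩ := hg
  have hg0 := hm.ne_zero
  set s := UniqueFactorizationMonoid.normalizedFactors g with hs
  have hmon : ∀ P ∈ s, P.Monic := fun P hP => by
    have h1 := UniqueFactorizationMonoid.normalize_normalized_factor P hP
    have h0 := (UniqueFactorizationMonoid.irreducible_of_normalized_factor P hP).ne_zero
    rw [← h1]; exact Polynomial.monic_normalize h0
  have hprod : s.prod = g := by
    rw [hs, UniqueFactorizationMonoid.prod_normalizedFactors_eq, hm.normalize_eq_self]
    exact hg0
  have hdsum : d = (s.map natDegree).sum := by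
    rw [← natDegree_multiset_prod_of_monic _ hmon, hprod, hd]
  have hdvd : ∀ P ∈ Irr p d, ∀ j, P ^ j ∣ g ↔ j ≤ s.count P := by
    intro P hP j
    rw [mem_Irr] at hP
    rw [pow_dvd_iff_le_emultiplicity,
      UniqueFactorizationMonoid.le_emultiplicity_iff_replicate_le_normalizedFactors hP.2.1 hg0,
      hP.1.normalize_eq_self, ← Multiset.le_count_iff_replicate_le]
  have hle : ∀ P ∈ s, P.natDegree ≤ d := fun P hP => by
    have : P ∣ g := UniqueFactorizationMonoid.dvd_of_mem_normalizedFactors hP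
    rw [← hd]; exact natDegree_le_of_dvd this hg0
  have hsub : s.toFinset ⊆ Irr p d := by
    intro P hP
    rw [Multiset.mem_toFinset] at hP
    rw [mem_Irr]
    exact ⟨hmon P hP, UniqueFactorizationMonoid.irreducible_of_normalized_factor P hP, hle P hP⟩
  have hterm : ∀ P ∈ Irr p d, (∑ j ∈ Finset.Icc 1 d, if P ^ j ∣ g then P.natDegree else 0) =
      s.count P * P.natDegree := by
    intro P hP
    have hP' := mem_Irr.mp hP
    have hpos : 0 < P.natDegree := hP'.2.1.natDegree_pos
    have hcd : s.count P ≤ d := by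
      have h1 : P ^ s.count P ∣ g := (hdvd P hP _).mpr le_rfl
      have h2 := natDegree_le_of_dvd h1 hg0
      rw [natDegree_pow, hd] at h2
      exact (Nat.le_mul_of_pos_right _ hpos).trans h2
    simp only [hdvd P hP]
    rw [← Finset.sum_filter, Finset.sum_const, smul_eq_mul]
    congr 1
    have : (Finset.Icc 1 d).filter (· ≤ s.count P) = Finset.Icc 1 (s.count P) := by
      ext j; simp only [Finset.mem_filter, Finset.mem_Icc]; omega
    rw [this]; simp
  rw [Finset.sum_congr rfl hterm, ← Finset.sum_subset hsub]
  · conv_lhs => rw [hdsum]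
    rw [Finset.sum_multiset_map_count]
    simp
  · intro P _ hP
    rw [Multiset.mem_toFinset] at hP
    rw [Multiset.count_eq_zero_of_notMem hP, zero_mul]

/-- coefficients of the L-function -/
noncomputable def sg {p m : ℕ} [Fact p.Prime] (χ : Fin m → MulChar (ZMod p) ℂ)
    (t : Fin m → ZMod p) (d : ℕ) : ℂ := ∑ g ∈ Mon p d, XX χ t g

lemma sum_dvd {p m : ℕ} [Fact p.Prime] (χ : Fin m → MulChar (ZMod p) ℂ)
    (t : Fin m → ZMod p) (d : ℕ) (Q : (ZMod p)[X]) (hQ : Q.Monic)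
    [DecidableRel (α := (ZMod p)[X]) (· ∣ ·)] :
    ∑ g ∈ (Mon p d).filter (Q ∣ ·), XX χ t g =
      if Q.natDegree ≤ d then XX χ t Q * sg χ t (d - Q.natDegree) else 0 := by
  classical
  split_ifs with h
  · rw [sg, Finset.mul_sum]
    symm
    refine Finset.sum_bij (fun h _ => Q * h) ?_ ?_ ?_ ?_
    · intro a ha
      rw [mem_Mon] at ha
      rw [Finset.mem_filter, mem_Mon]
      refine ⟨⟨hQ.mul ha.1, ?_⟩, dvd_mul_right _ _⟩
      rw [hQ.natDegree_mul ha.1, ha.2]; omega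
    · intro a _ b _ hab
      exact mul_left_cancel₀ hQ.ne_zero hab
    · intro b hb
      rw [Finset.mem_filter, mem_Mon] at hb
      obtain ⟨⟨h1, h2⟩, a, rfl⟩ := hb
      have ha : a.Monic := hQ.of_mul_monic_left h1
      refine ⟨a, ?_, rfl⟩
      rw [mem_Mon]
      rw [hQ.natDegree_mul ha] at h2
      exact ⟨ha, by omega⟩
    · intro a _; rw [XX_mul]
  · rw [Finset.filter_eq_empty_iff.mpr, Finset.sum_empty]
    intro g hg hd
    rw [mem_Mon] at hg
    have := natDegree_le_of_dvd hd hg.1.ne_zero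
    omega

lemma sg_rec {p m : ℕ} [Fact p.Prime] (χ : Fin m → MulChar (ZMod p) ℂ)
    (t : Fin m → ZMod p) (S : ℕ → ℂ)
    (hS : ∀ D k, k ≤ D → 0 < k → S k = ∑ P ∈ Irr p D, if P.natDegree ∣ k then
      (P.natDegree : ℂ) * XX χ t P ^ (k / P.natDegree) else 0) (d : ℕ) :
    (d : ℂ) * sg χ t d = ∑ k ∈ Finset.Icc 1 d, S k * sg χ t (d - k) := by
  classical
  have h1 : (d : ℂ) * sg χ t d = ∑ P ∈ Irr p d, ∑ j ∈ Finset.Icc 1 d,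
      if j * P.natDegree ≤ d then
        (P.natDegree : ℂ) * XX χ t P ^ j * sg χ t (d - j * P.natDegree) else 0 := by
    have h2 : (d : ℂ) * sg χ t d = ∑ g ∈ Mon p d, ∑ P ∈ Irr p d, ∑ j ∈ Finset.Icc 1 d,
        if P ^ j ∣ g then (P.natDegree : ℂ) * XX χ t g else 0 := by
      rw [sg, Finset.mul_sum]
      refine Finset.sum_congr rfl fun g hg => ?_
      have := congrArg (Nat.cast : ℕ → ℂ) (deg_sum g hg)
      rw [this]
      push_cast
      rw [Finset.sum_mul]
      refine Finset.sum_congr rfl fun P _ => ?_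
      rw [Finset.sum_mul]
      refine Finset.sum_congr rfl fun j _ => ?_
      split_ifs <;> simp
    rw [h2, Finset.sum_comm]
    refine Finset.sum_congr rfl fun P hP => ?_
    rw [Finset.sum_comm]
    refine Finset.sum_congr rfl fun j _ => ?_
    rw [← Finset.sum_filter, ← Finset.mul_sum, sum_dvd χ t d (P ^ j) ((mem_Irr.mp hP).1.pow j),
      natDegree_pow, XX_pow]
    split_ifs
    · ring
    · ring
  rw [h1]
  have h3 : ∀ k ∈ Finset.Icc 1 d, S k * sg χ t (d - k) = ∑ P ∈ Irr p d,
      if P.natDegree ∣ k then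
        (P.natDegree : ℂ) * XX χ t P ^ (k / P.natDegree) * sg χ t (d - k) else 0 := by
    intro k hk
    rw [Finset.mem_Icc] at hk
    rw [hS d k hk.2 hk.1, Finset.sum_mul]
    refine Finset.sum_congr rfl fun P _ => ?_
    split_ifs <;> simp
  rw [Finset.sum_congr rfl h3]
  conv_rhs => rw [Finset.sum_comm]
  refine Finset.sum_congr rfl fun P hP => ?_
  have hpos : 0 < P.natDegree := (mem_Irr.mp hP).2.1.natDegree_pos
  rw [← Finset.sum_filter, ← Finset.sum_filter]
  refine Finset.sum_bij (fun j _ => j * P.natDegree) ?_ ?_ ?_ ?_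
  · intro j hj
    simp only [Finset.mem_filter, Finset.mem_Icc] at hj ⊢
    exact ⟨⟨Nat.mul_pos hj.1.1 hpos, hj.2⟩, dvd_mul_left _ _⟩
  · intro a _ b _ hab
    exact Nat.eq_of_mul_eq_mul_right hpos hab
  · intro k hk
    simp only [Finset.mem_filter, Finset.mem_Icc] at hk
    obtain ⟨⟨hk1, hk2⟩, j, rfl⟩ := hk
    refine ⟨j, ?_, mul_comm _ _⟩
    simp only [Finset.mem_filter, Finset.mem_Icc]
    refine ⟨⟨Nat.pos_of_mul_pos_left hk1, ?_⟩, by rwa [mul_comm]⟩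
    exact (Nat.le_mul_of_pos_left _ hpos).trans hk2
  · intro j _
    rw [Nat.mul_div_cancel _ hpos]

lemma sg_zero {p m : ℕ} [Fact p.Prime] (χ : Fin m → MulChar (ZMod p) ℂ)
    (t : Fin m → ZMod p) : sg χ t 0 = 1 := by
  have : Mon p 0 = {1} := by
    ext g
    rw [mem_Mon, Finset.mem_singleton]
    constructor
    · rintro ⟨h1, h2⟩
      exact h1.natDegree_eq_zero.mp h2
    · rintro rfl; simp
  rw [sg, this, Finset.sum_singleton, XX_one]

lemma sg_one {p m : ℕ} [Fact p.Prime] (χ : Fin m → MulChar (ZMod p) ℂ)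
    (t : Fin m → ZMod p) : sg χ t 1 = ∑ x : ZMod p, ∏ i, χ i (t i - x) := by
  symm
  refine Finset.sum_bij (fun x _ => X - C x) ?_ ?_ ?_ ?_
  · intro x _; rw [mem_Mon]; exact ⟨monic_X_sub_C x, natDegree_X_sub_C x⟩
  · intro a _ b _ h
    simpa using h
  · intro g hg
    rw [mem_Mon] at hg
    refine ⟨-g.coeff 0, Finset.mem_univ _, ?_⟩
    rw [hg.1.eq_X_add_C hg.2]; simp
  · intro x _; simp [XX]

lemma sg_eq_zero {p m : ℕ} [Fact p.Prime] (χ : Fin m → MulChar (ZMod p) ℂ)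
    (t : Fin m → ZMod p) (ht : Function.Injective t) (hχ : ∃ i, χ i ≠ 1) (d : ℕ) (hd : m ≤ d) :
    sg χ t d = 0 := by
  classical
  obtain ⟨i0, hi⟩ := hχ
  obtain ⟨a, ha⟩ := MulChar.ne_one_iff.mp hi
  let ℓ := Lagrange.basis Finset.univ t i0
  have hℓ0 : ℓ.eval (t i0) = 1 :=
    Lagrange.eval_basis_self ht.injOn (Finset.mem_univ _)
  have hℓ1 : ∀ i, i ≠ i0 → ℓ.eval (t i) = 0 := fun i h =>
    Lagrange.eval_basis_of_ne (Ne.symm h) (Finset.mem_univ _)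
  have hℓd : ℓ.degree < d := by
    have := Lagrange.degree_basis (s := Finset.univ) (v := t) ht.injOn (Finset.mem_univ i0)
    rw [this]
    simp only [Finset.card_univ, Fintype.card_fin]
    have : 0 < m := i0.pos
    exact_mod_cast (by omega : m - 1 < d)
  have hmem : ∀ (b : ZMod p) g, g ∈ Mon p d → g + C b * ℓ ∈ Mon p d := by
    intro b g hg
    rw [mem_Mon] at hg ⊢
    have hdg : (C b * ℓ).degree < g.degree := by
      rw [degree_eq_natDegree hg.1.ne_zero, hg.2]
      rw [← smul_eq_C_mul]
      exact (degree_smul_le b ℓ).trans_lt hℓd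
    refine ⟨hg.1.add_of_left hdg, ?_⟩
    rw [natDegree_add_eq_left_of_degree_lt hdg, hg.2]
  let f : (ZMod p)ˣ → (ZMod p)[X] → (ZMod p)[X] := fun u g =>
    g + C (((u : ZMod p) - 1) * g.eval (t i0)) * ℓ
  have hev : ∀ u g, (f u g).eval (t i0) = u * g.eval (t i0) := by
    intro u g; simp [f, hℓ0]; ring
  have hev1 : ∀ u g i, i ≠ i0 → (f u g).eval (t i) = g.eval (t i) := by
    intro u g i h; simp [f, hℓ1 i h]
  have hff : ∀ u v : (ZMod p)ˣ, u * v = 1 → ∀ g, f u (f v g) = g := by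
    intro u v huv g
    have h1 : (u : ZMod p) * v = 1 := by rw [← Units.val_mul, huv]; rfl
    have h2 : f u (f v g) = f v g + C (((u : ZMod p) - 1) * (f v g).eval (t i0)) * ℓ := rfl
    rw [h2, hev]
    simp only [f]
    rw [add_assoc, ← add_mul, ← C_add]
    have : ((v : ZMod p) - 1) * eval (t i0) g + ((u : ZMod p) - 1) * (v * eval (t i0) g) = 0 := by
      linear_combination (eval (t i0) g) * h1
    rw [this]; simp
  have h1 : sg χ t d = ∑ g ∈ Mon p d, XX χ t (f a g) := by
    symm
    refine Finset.sum_bij (fun g _ => f a g) (fun g hg => hmem _ g hg) ?_ ?_ (fun _ _ => rfl)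
    · intro g _ g' _ h
      have := congrArg (f a⁻¹) h
      simpa only [hff a⁻¹ a (by simp)] using this
    · intro g hg
      exact ⟨f a⁻¹ g, hmem _ g hg, hff a a⁻¹ (by simp) g⟩
  have h2 : ∀ g, XX χ t (f a g) = χ i0 a * XX χ t g := by
    intro g
    rw [XX, XX, ← Finset.mul_prod_erase _ _ (Finset.mem_univ i0),
      ← Finset.mul_prod_erase _ _ (Finset.mem_univ i0), hev, map_mul, mul_assoc]
    congr 2
    refine Finset.prod_congr rfl fun i hi => ?_
    rw [hev1 _ _ _ (Finset.ne_of_mem_erase hi)]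
  simp only [h2] at h1
  rw [← Finset.mul_sum, ← sg] at h1
  have h3 : (χ i0 a - 1) * sg χ t d = 0 := by linear_combination -h1
  exact (mul_eq_zero.mp h3).resolve_left (sub_ne_zero.mpr ha)

end Stp
end

section
open Polynomial

namespace Stp

lemma weil_analytic (m : ℕ) (σ S : ℕ → ℂ) (B q : ℝ) (hq : 0 < q) 
    (h0 : σ 0 = 1) (hm : ∀ d, m ≤ d → σ d = 0)
    (hrec : ∀ d : ℕ, (d : ℂ) * σ d = ∑ k ∈ Finset.range (d + 1), S k * σ (d - k))
    (hS : ∀ k, ‖S k‖ ≤ B * q ^ k) : ‖σ 1‖ ≤ m * q := by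
  classical
  set L : ℂ[X] := ∑ d ∈ Finset.range m, C (σ d) * X ^ d with hL
  have hLc : ∀ d, L.coeff d = σ d := by
    intro d
    rw [hL, finsetSum_coeff]
    simp only [coeff_C_mul, coeff_X_pow, mul_ite, mul_one, mul_zero]
    rw [Finset.sum_ite_eq]
    split_ifs with h
    · rfl
    · rw [hm d (by simpa using h)]
  have hLe : ∀ T : ℂ, L.eval T = ∑ d ∈ Finset.range m, σ d * T ^ d := by
    intro T; simp [hL, eval_finsetSum]
  have hL1 : L.eval 0 = 1 := by rw [← coeff_zero_eq_eval_zero, hLc, h0]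
  have hLdeg : L.natDegree ≤ m := by
    rw [natDegree_le_iff_coeff_eq_zero]
    intro N hN; rw [hLc, hm N hN.le]
  have hL0 : L ≠ 0 := by intro h; rw [h] at hL1; simp at hL1
  have hLd : ∀ T : ℂ, T * L.derivative.eval T = ∑ d ∈ Finset.range m, (d : ℂ) * σ d * T ^ d := by
    intro T
    rw [hL]
    simp only [derivative_sum, eval_finsetSum, Finset.mul_sum]
    refine Finset.sum_congr rfl fun d _ => ?_
    rcases d with _ | d
    · simp
    · simp; ring
  -- the logarithmic derivative
  have hid : ∀ T : ℂ, q * ‖T‖ < 1 →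
      ‖T * L.derivative.eval T‖ ≤ ‖L.eval T‖ * (B * (1 - q * ‖T‖)⁻¹) := by
    intro T hT
    have hT0 : 0 ≤ q * ‖T‖ := by positivity
    have hgeo := summable_geometric_of_lt_one hT0 hT
    have hb : ∀ k, ‖S k * T ^ k‖ ≤ B * (q * ‖T‖) ^ k := fun k => by
      rw [norm_mul, norm_pow, mul_pow, ← mul_assoc]
      exact mul_le_mul_of_nonneg_right (hS k) (by positivity)
    have hsum : Summable fun k => ‖S k * T ^ k‖ :=
      Summable.of_nonneg_of_le (fun _ => norm_nonneg _) hb (hgeo.mul_left B)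
    have hz : ∀ d, d ∉ Finset.range m → σ d * T ^ d = 0 := fun d hd => by
      rw [hm d (by simpa using hd), zero_mul]
    have hsum2 : Summable fun d => ‖σ d * T ^ d‖ :=
      summable_of_ne_finset_zero (s := Finset.range m) fun d hd => by rw [hz d hd, norm_zero]
    have hprod := tsum_mul_tsum_eq_tsum_sum_range_of_summable_norm hsum hsum2
    have h1 : ∀ n, ∑ k ∈ Finset.range (n + 1), S k * T ^ k * (σ (n - k) * T ^ (n - k)) =
        (n : ℂ) * σ n * T ^ n := by
      intro n
      rw [hrec, Finset.sum_mul]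
      refine Finset.sum_congr rfl fun k hk => ?_
      have : T ^ n = T ^ k * T ^ (n - k) := by
        rw [← pow_add]; congr 1; have := Finset.mem_range.mp hk; omega
      rw [this]; ring
    simp only [h1] at hprod
    rw [tsum_eq_sum (s := Finset.range m) (f := fun d => σ d * T ^ d) (fun d hd => hz d hd),
      tsum_eq_sum (s := Finset.range m) (f := fun n : ℕ => (n : ℂ) * σ n * T ^ n), ← hLe, ← hLd]
      at hprod
    · rw [← hprod, norm_mul, mul_comm]
      refine mul_le_mul_of_nonneg_left ?_ (norm_nonneg _)
      refine (norm_tsum_le_tsum_norm hsum).trans ?_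
      rw [← tsum_geometric_of_lt_one hT0 hT, ← tsum_mul_left]
      exact hsum.tsum_le_tsum hb (hgeo.mul_left B)
    · intro d hd
      rw [hm d (by simpa using hd)]; simp
  have hroot : ∀ z, L.eval z = 0 → 1 ≤ q * ‖z‖ := by
    intro z hz
    by_contra! hlt
    have hz0 : z ≠ 0 := by rintro rfl; rw [hL1] at hz; exact one_ne_zero hz
    obtain ⟨R, hR, hnd⟩ := exists_eq_pow_rootMultiplicity_mul_and_not_dvd L hL0 z
    have hepos : 0 < L.rootMultiplicity z := (rootMultiplicity_pos hL0).mpr hz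
    obtain ⟨e, he⟩ : ∃ e, L.rootMultiplicity z = e + 1 := ⟨_, (Nat.succ_pred_eq_of_pos hepos).symm⟩
    rw [he] at hR
    have hRz : R.eval z ≠ 0 := fun h => hnd (dvd_iff_isRoot.mpr h)
    have hder : ∀ T, L.derivative.eval T =
        (T - z) ^ e * (((e : ℂ) + 1) * R.eval T + (T - z) * R.derivative.eval T) := by
      intro T
      rw [hR, derivative_mul, derivative_pow]
      simp
      ring
    have hLT : ∀ T, L.eval T = (T - z) ^ e * ((T - z) * R.eval T) := by
      intro T; rw [hR]; simp; ring
    have key : ∀ T, q * ‖T‖ < 1 → T ≠ z →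
        ‖T * (((e : ℂ) + 1) * R.eval T + (T - z) * R.derivative.eval T)‖ ≤
          ‖(T - z) * R.eval T‖ * (B * (1 - q * ‖T‖)⁻¹) := by
      intro T hT hTz
      have h := hid T hT
      rw [hder, hLT] at h
      have h2 : T * ((T - z) ^ e * (((e : ℂ) + 1) * R.eval T + (T - z) * R.derivative.eval T)) =
        (T - z) ^ e * (T * (((e : ℂ) + 1) * R.eval T + (T - z) * R.derivative.eval T)) := by ring
      rw [h2, norm_mul, norm_mul ((T - z) ^ e), mul_assoc] at h
      have h3 : 0 < ‖(T - z) ^ e‖ := norm_pos_iff.mpr (pow_ne_zero _ (sub_ne_zero.mpr hTz))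
      exact le_of_mul_le_mul_left h h3
    have hc1 : Filter.Tendsto (fun T : ℂ =>
        ‖T * (((e : ℂ) + 1) * R.eval T + (T - z) * R.derivative.eval T)‖) (nhdsWithin z {z}ᶜ)
        (nhds ‖z * (((e : ℂ) + 1) * R.eval z + (z - z) * R.derivative.eval z)‖) := by
      refine Filter.Tendsto.mono_left (Continuous.tendsto ?_ z) nhdsWithin_le_nhds
      fun_prop
    have hc2 : Filter.Tendsto (fun T : ℂ => ‖(T - z) * R.eval T‖ * (B * (1 - q * ‖T‖)⁻¹))
        (nhdsWithin z {z}ᶜ) (nhds (‖(z - z) * R.eval z‖ * (B * (1 - q * ‖z‖)⁻¹))) := by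
      refine Filter.Tendsto.mono_left (ContinuousAt.tendsto ?_) nhdsWithin_le_nhds
      have : 1 - q * ‖z‖ ≠ 0 := by linarith
      fun_prop (disch := assumption)
    have hev : ∀ᶠ T in nhdsWithin z {z}ᶜ, q * ‖T‖ < 1 ∧ T ≠ z := by
      refine Filter.Eventually.and ?_ self_mem_nhdsWithin
      refine Filter.Eventually.filter_mono nhdsWithin_le_nhds ?_
      exact ContinuousAt.eventually_lt (by fun_prop) continuousAt_const hlt
    have hfin := le_of_tendsto_of_tendsto hc1 hc2 (hev.mono fun T hT => key T hT.1 hT.2)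
    simp only [sub_self, zero_mul, norm_zero, add_zero] at hfin
    have : z * (((e : ℂ) + 1) * R.eval z) ≠ 0 :=
      mul_ne_zero hz0 (mul_ne_zero (by exact_mod_cast Nat.succ_ne_zero e) hRz)
    exact absurd hfin (not_le.mpr (norm_pos_iff.mpr this))
  have hs := (IsAlgClosed.splits L).eval_derivative_div_eval_of_ne_zero (x := 0)
    (by rw [hL1]; exact one_ne_zero)
  have hd0 : L.derivative.eval 0 = σ 1 := by
    rw [← coeff_zero_eq_eval_zero, coeff_derivative, hLc]; simp
  rw [hd0, hL1, div_one] at hs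
  rw [hs]
  refine (norm_multiset_sum_le _).trans ?_
  refine (Multiset.sum_le_card_nsmul _ q ?_).trans ?_
  · intro r hr
    simp only [Multiset.map_map, Multiset.mem_map] at hr
    obtain ⟨z, hz, rfl⟩ := hr
    have hz1 := hroot z (by rw [mem_roots hL0] at hz; exact hz)
    have hzpos : 0 < ‖z‖ := by
      by_contra! h
      have : ‖z‖ = 0 := le_antisymm h (norm_nonneg _)
      rw [this] at hz1; linarith
    simp only [Function.comp, zero_sub, norm_div, norm_one, norm_neg]
    rw [div_le_iff₀ hzpos]; exact hz1
  · rw [nsmul_eq_mul]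
    refine mul_le_mul_of_nonneg_right ?_ hq.le
    simp only [Multiset.card_map]
    exact_mod_cast (card_roots' L).trans hLdeg

theorem weil {p m : ℕ} [hp : Fact p.Prime] (χ : Fin m → MulChar (ZMod p) ℂ)
    (t : Fin m → ZMod p) (ht : Function.Injective t) (hχ : ∃ i, χ i ≠ 1) :
    ‖∑ x : ZMod p, ∏ i, χ i (t i - x)‖ ≤ m * √(p : ℝ) := by
  classical
  obtain ⟨B, hB0, hB⟩ := SS_bound χ t ht hχ
  let S : ℕ → ℂ := fun k => if k = 0 then 0 else
    letI := Fintype.ofFinite (GaloisField p k)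
    SS χ t (GaloisField p k)
  have hcard : ∀ k, k ≠ 0 → ∀ inst : Fintype (GaloisField p k),
      @Fintype.card (GaloisField p k) inst = p ^ k := by
    intro k hk inst
    rw [Fintype.card_eq_nat_card, GaloisField.card p k hk]
  have hq : 0 < √(p : ℝ) := Real.sqrt_pos.mpr (by exact_mod_cast hp.out.pos)
  rw [← sg_one]
  refine weil_analytic m (sg χ t) S B (√p) hq (sg_zero χ t)
    (sg_eq_zero χ t ht hχ) ?_ ?_
  · intro d
    rw [sg_rec χ t S ?_ d]
    · refine Finset.sum_subset ?_ ?_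
      · intro k hk
        rw [Finset.mem_Icc] at hk
        rw [Finset.mem_range]; omega
      · intro k hk hk2
        rw [Finset.mem_Icc] at hk2
        rw [Finset.mem_range] at hk
        have : k = 0 := by omega
        simp [S, this]
    · intro D k hk hk0
      simp only [S, if_neg hk0.ne']
      let _ := Fintype.ofFinite (GaloisField p k)
      exact SS_eq χ t (GaloisField p k) (hcard k hk0.ne' _) D hk hk0
  · intro k
    by_cases hk : k = 0
    · simp [S, hk, hB0]
    · simp only [S, if_neg hk]
      let _ := Fintype.ofFinite (GaloisField p k)
      have := hB k (GaloisField p k) (hcard k hk _)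
      have h2 : √((p : ℝ) ^ k) = √(p : ℝ) ^ k := by
        rw [← Real.sqrt_sq (x := √(p : ℝ) ^ k) (by positivity), ← pow_mul, mul_comm, pow_mul,
          Real.sq_sqrt (by positivity)]
      rwa [h2] at this

end Stp
end

section
open Polynomial

namespace Stp

lemma indicator {p : ℕ} [hp : Fact p.Prime] (G : Subgroup (ZMod p)ˣ) :
    ∃ A : Finset (MulChar (ZMod p) ℂ), A.card = G.index ∧ 1 ∈ A ∧
      (∀ a : ZMod p, a ∈ Units.val '' (G : Set (ZMod p)ˣ) → ∑ χ ∈ A, χ a = G.index) ∧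
      (∀ a : ZMod p, a ∉ Units.val '' (G : Set (ZMod p)ˣ) → ∑ χ ∈ A, χ a = 0) := by
  classical
  have : NeZero (Monoid.exponent (ZMod p)ˣ) := ⟨Monoid.exponent_ne_zero_of_finite⟩
  let Y : Subgroup (MulChar (ZMod p) ℂ) :=
    (MulChar.subgroupOrderIsoSubgroupMulChar (ZMod p) ℂ G).ofDual
  have hY : ∀ χ, χ ∈ Y ↔ ∀ m ∈ G, χ (m : ZMod p) = 1 := fun χ =>
    MulChar.mem_subgroupOrderIsoSubgroupMulChar_iff
  have hG : ∀ m : (ZMod p)ˣ, m ∈ G ↔ ∀ χ ∈ Y, χ (m : ZMod p) = 1 := fun m => by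
    have h := MulChar.mem_subgroupOrderIsoSubgroupMulChar_symm_iff (X := Y) (m := m)
    rw [← h]
    simp [Y]
  have hc : Nat.card Y = G.index :=
    MulChar.card_subgroupOrderIsoSubgroupMulChar
  have hfin : (Y : Set (MulChar (ZMod p) ℂ)).Finite := Set.toFinite _
  have hmem : ∀ χ, χ ∈ hfin.toFinset ↔ χ ∈ Y := fun χ => by simp
  have hcard : hfin.toFinset.card = G.index := by
    rw [← hc, ← Set.ncard_eq_toFinset_card _ hfin]; rfl
  refine ⟨hfin.toFinset, hcard, (hmem 1).mpr Y.one_mem, ?_, ?_⟩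
  · rintro _ ⟨u, hu, rfl⟩
    rw [Finset.sum_congr rfl (g := fun _ => (1 : ℂ))]
    · simp [← hcard]
    · intro χ hχ
      exact (hY χ).mp ((hmem χ).mp hχ) u hu
  · intro a ha
    by_cases ha0 : a = 0
    · subst ha0
      exact Finset.sum_eq_zero fun χ _ => MulChar.map_zero χ
    · have hu : Units.mk0 a ha0 ∉ G := fun h => ha ⟨_, h, rfl⟩
      rw [hG] at hu
      push Not at hu
      obtain ⟨ψ, hψ, hne⟩ := hu
      simp only [Units.val_mk0] at hne
      have h1 : ψ a * ∑ χ ∈ hfin.toFinset, χ a = ∑ χ ∈ hfin.toFinset, χ a := by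
        rw [Finset.mul_sum]
        refine Finset.sum_bij (fun χ _ => ψ * χ) ?_ ?_ ?_ ?_
        · intro χ hχ
          exact (hmem _).mpr (Y.mul_mem hψ ((hmem _).mp hχ))
        · intro χ _ χ' _ h
          exact mul_left_cancel h
        · intro χ hχ
          exact ⟨ψ⁻¹ * χ, (hmem _).mpr (Y.mul_mem (Y.inv_mem hψ) ((hmem _).mp hχ)), by simp⟩
        · intro χ _; simp
      have h2 : (ψ a - 1) * ∑ χ ∈ hfin.toFinset, χ a = 0 := by linear_combination h1
      exact (mul_eq_zero.mp h2).resolve_left (sub_ne_zero.mpr hne)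

lemma weil_shift {p r : ℕ} [hp : Fact p.Prime] (hrp : r < p) (χ : Fin r → MulChar (ZMod p) ℂ)
    (hχ : ∃ i, χ i ≠ 1) :
    ‖∑ x : ZMod p, ∏ i, χ i (1 + ((i : ℕ) + 1 : ZMod p) * x)‖ ≤ r * √(p : ℝ) := by
  classical
  have hne : ∀ i : Fin r, ((i : ℕ) + 1 : ZMod p) ≠ 0 := by
    intro i h
    have h1 : (((i : ℕ) + 1 : ℕ) : ZMod p) = 0 := by push_cast; exact h
    rw [ZMod.natCast_eq_zero_iff] at h1
    have := Nat.le_of_dvd (Nat.succ_pos _) h1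
    have := i.2
    omega
  let t : Fin r → ZMod p := fun i => -((i : ℕ) + 1 : ZMod p)⁻¹
  have ht : Function.Injective t := by
    intro i j h
    have h1 : ((i : ℕ) + 1 : ZMod p) = ((j : ℕ) + 1 : ZMod p) := inv_injective (neg_injective h)
    have h2 : ((i : ℕ) : ZMod p) = ((j : ℕ) : ZMod p) := add_right_cancel h1
    have h3 := (ZMod.natCast_eq_natCast_iff' _ _ _).mp h2
    rw [Nat.mod_eq_of_lt (i.2.trans hrp), Nat.mod_eq_of_lt (j.2.trans hrp)] at h3
    exact Fin.ext h3
  have h1 : ∀ x : ZMod p, ∏ i, χ i (1 + ((i : ℕ) + 1 : ZMod p) * x) =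
      (∏ i : Fin r, χ i (-((i : ℕ) + 1 : ZMod p))) * ∏ i, χ i (t i - x) := by
    intro x
    rw [← Finset.prod_mul_distrib]
    refine Finset.prod_congr rfl fun i _ => ?_
    rw [← map_mul]
    congr 1
    have := hne i
    simp only [t]
    field_simp
    ring
  rw [Finset.sum_congr rfl fun x _ => h1 x, ← Finset.mul_sum, norm_mul]
  refine (mul_le_of_le_one_left (norm_nonneg _) (prod_chi_le χ _)).trans ?_
  exact weil χ t ht hχ

lemma count_b {p r : ℕ} [hp : Fact p.Prime] (hrp : r < p) (G : Subgroup (ZMod p)ˣ)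
    (N : Finset (ZMod p)) (hN : ∀ x : ZMod p, x ∈ N ↔
      ∀ i : Fin r, 1 + ((i : ℕ) + 1 : ZMod p) * x ∈ Units.val '' (G : Set (ZMod p)ˣ)) :
    (p : ℝ) - r - (G.index : ℝ) ^ r * (r * √(p : ℝ)) ≤ (G.index : ℝ) ^ r * N.card := by
  classical
  obtain ⟨A, hAc, h1A, hA1, hA0⟩ := indicator G
  have h1 : ((G.index : ℂ)) ^ r * N.card = ∑ f ∈ Fintype.piFinset (fun _ : Fin r => A),
      ∑ x : ZMod p, ∏ i, f i (1 + ((i : ℕ) + 1 : ZMod p) * x) := by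
    rw [Finset.sum_comm]
    have h2 : ∀ x : ZMod p, ∑ f ∈ Fintype.piFinset (fun _ : Fin r => A),
        ∏ i, f i (1 + ((i : ℕ) + 1 : ZMod p) * x) = if x ∈ N then (G.index : ℂ) ^ r else 0 := by
      intro x
      rw [← Finset.prod_univ_sum (fun _ : Fin r => A)
        (fun i (ψ : MulChar (ZMod p) ℂ) => ψ (1 + ((i : ℕ) + 1 : ZMod p) * x))]
      split_ifs with h
      · rw [Finset.prod_congr rfl fun i _ => hA1 _ ((hN x).mp h i)]
        simp
      · rw [hN] at h
        push Not at h
        obtain ⟨i, hi⟩ := h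
        exact Finset.prod_eq_zero (Finset.mem_univ i) (hA0 _ hi)
    rw [Finset.sum_congr rfl fun x _ => h2 x, ← Finset.sum_filter, Finset.sum_const, nsmul_eq_mul]
    simp [mul_comm]
  have h1mem : (1 : Fin r → MulChar (ZMod p) ℂ) ∈ Fintype.piFinset (fun _ : Fin r => A) := by
    rw [Fintype.mem_piFinset]; intro _; exact h1A
  rw [← Finset.add_sum_erase _ _ h1mem] at h1
  set Z : Finset (ZMod p) := Finset.univ.filter fun x =>
    ∀ i : Fin r, 1 + ((i : ℕ) + 1 : ZMod p) * x ≠ 0 with hZ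
  have hMain : ∑ x : ZMod p, ∏ i : Fin r, (1 : Fin r → MulChar (ZMod p) ℂ) i
      (1 + ((i : ℕ) + 1 : ZMod p) * x) = Z.card := by
    have h3 : ∀ x : ZMod p, ∏ i : Fin r, (1 : Fin r → MulChar (ZMod p) ℂ) i
      (1 + ((i : ℕ) + 1 : ZMod p) * x) = if x ∈ Z then 1 else 0 := by
      intro x
      split_ifs with h
      · refine Finset.prod_eq_one fun i _ => ?_
        have := (Finset.mem_filter.mp h).2 i
        exact MulChar.one_apply (isUnit_iff_ne_zero.mpr this)
      · simp only [hZ, Finset.mem_filter, Finset.mem_univ, true_and] at h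
        push Not at h
        obtain ⟨i, hi⟩ := h
        refine Finset.prod_eq_zero (Finset.mem_univ i) ?_
        rw [hi]; exact MulChar.map_zero _
    rw [Finset.sum_congr rfl fun x _ => h3 x]
    simp
  have hZc : p ≤ Z.card + r := by
    have hsub : (Finset.univ : Finset (ZMod p)) ⊆
        Z ∪ Finset.univ.image (fun i : Fin r => -((i : ℕ) + 1 : ZMod p)⁻¹) := by
      intro x _
      by_cases h : ∀ i : Fin r, 1 + ((i : ℕ) + 1 : ZMod p) * x ≠ 0
      · exact Finset.mem_union_left _ (Finset.mem_filter.mpr ⟨Finset.mem_univ _, h⟩)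
      · push Not at h
        obtain ⟨i, hi⟩ := h
        refine Finset.mem_union_right _ (Finset.mem_image.mpr ⟨i, Finset.mem_univ _, ?_⟩)
        have hne : ((i : ℕ) + 1 : ZMod p) ≠ 0 := by
          intro h0; rw [h0] at hi; simp at hi
        field_simp
        linear_combination -hi
    have h4 := (Finset.card_le_card hsub).trans (Finset.card_union_le _ _)
    rw [Finset.card_univ, ZMod.card] at h4
    have h5 : (Finset.univ.image (fun i : Fin r => -((i : ℕ) + 1 : ZMod p)⁻¹)).card ≤ r :=
      Finset.card_image_le.trans (by simp)
    omega
  rw [hMain] at h1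
  have herr : ‖∑ f ∈ (Fintype.piFinset (fun _ : Fin r => A)).erase 1,
      ∑ x : ZMod p, ∏ i, f i (1 + ((i : ℕ) + 1 : ZMod p) * x)‖ ≤
      (G.index : ℝ) ^ r * (r * √(p : ℝ)) := by
    refine (norm_sum_le _ _).trans ?_
    refine (Finset.sum_le_card_nsmul _ _ (r * √(p : ℝ)) ?_).trans ?_
    · intro f hf
      refine weil_shift hrp f ?_
      by_contra! h
      exact Finset.ne_of_mem_erase hf (funext h)
    · rw [nsmul_eq_mul]
      refine mul_le_mul_of_nonneg_right ?_ (by positivity)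
      have h6 : ((Fintype.piFinset (fun _ : Fin r => A)).erase 1).card ≤ G.index ^ r := by
        refine (Finset.card_erase_le).trans ?_
        rw [Fintype.card_piFinset]
        simp [hAc]
      exact_mod_cast h6
  have h7 : ‖((G.index : ℂ)) ^ r * N.card - Z.card‖ ≤ (G.index : ℝ) ^ r * (r * √(p : ℝ)) := by
    rw [h1, add_sub_cancel_left]; exact herr
  have h8 : ((G.index : ℂ)) ^ r * N.card - Z.card =
    (((G.index : ℝ) ^ r * N.card - Z.card : ℝ) : ℂ) := by push_cast; rfl
  rw [h8, Complex.norm_real, Real.norm_eq_abs] at h7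
  have h9 := (abs_le.mp h7).1
  have h10 : (p : ℝ) ≤ Z.card + r := by exact_mod_cast hZc
  linarith

lemma final_aux {p r : ℕ} [hp : Fact p.Prime] (hr : 0 < r) (G : Subgroup (ZMod p)ˣ)
    (hG : (Nat.card G : ℝ) > (8 * r : ℝ) * (p : ℝ) ^ ((1 : ℝ) - 1 / (2 * (r : ℝ)))) :
    (Nat.card {ab : ZMod p × ZMod p //
            ab.2 ≠ 0 ∧ ∀ i : ℕ, i ≤ r →
              ab.1 + (i : ZMod p) * ab.2 ∈ Units.val '' (G : Set (ZMod p)ˣ)} : ℝ) ≥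
          1 / 2 * ((Nat.card G : ℝ) / (p : ℝ)) ^ r * (p : ℝ) * (Nat.card G : ℝ) := by
  classical
  set n : ℝ := (G.index : ℝ) with hn
  set g : ℝ := (Nat.card G : ℝ) with hg
  have hp0 : (0 : ℝ) < p := by exact_mod_cast hp.out.pos
  have hp1 : (1 : ℝ) ≤ p := by exact_mod_cast hp.out.one_le
  have hr1 : (1 : ℝ) ≤ r := by exact_mod_cast hr
  have hg0 : 0 < g := by rw [hg]; exact_mod_cast Nat.card_pos
  have hn1 : 1 ≤ n := by
    rw [hn]; exact_mod_cast Nat.pos_of_ne_zero Subgroup.index_ne_zero_of_finite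
  have hgn : g * n ≤ p := by
    have h1 : Nat.card G * G.index = p - 1 := by
      rw [Subgroup.card_mul_index, Nat.card_eq_fintype_card, ZMod.card_units]
    have h2 : Nat.card G * G.index ≤ p := by omega
    rw [hg, hn]; exact_mod_cast h2
  set s : ℝ := √(p : ℝ) with hs
  have hss : s * s = p := Real.mul_self_sqrt hp0.le
  have hs1 : 1 ≤ s := Real.one_le_sqrt.mpr hp1
  set w : ℝ := n ^ r with hw
  have hw1 : 1 ≤ w := one_le_pow₀ hn1
  have hkey : 8 * r * w < s := by
    have h1 : ((8 * r : ℝ) * (p : ℝ) ^ ((1 : ℝ) - 1 / (2 * (r : ℝ)))) ^ r < g ^ r :=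
      pow_lt_pow_left₀ hG (by positivity) hr.ne'
    have h2 : ((p : ℝ) ^ ((1 : ℝ) - 1 / (2 * (r : ℝ)))) ^ r * s = (p : ℝ) ^ r := by
      rw [hs, Real.sqrt_eq_rpow, ← Real.rpow_natCast, ← Real.rpow_mul hp0.le, ← Real.rpow_add hp0,
        ← Real.rpow_natCast]
      congr 1
      field_simp
      ring
    have h3 : g ^ r * w ≤ (p : ℝ) ^ r := by
      rw [hw, ← mul_pow]; exact pow_le_pow_left₀ (by positivity) hgn r
    have h4 : (8 * r : ℝ) ≤ (8 * r : ℝ) ^ r := le_self_pow₀ (by linarith) hr.ne'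
    set P : ℝ := ((p : ℝ) ^ ((1 : ℝ) - 1 / (2 * (r : ℝ)))) ^ r with hP
    have hP0 : 0 < P := by positivity
    rw [mul_pow] at h1
    have h5 : (8 * r : ℝ) * P ≤ (8 * r : ℝ) ^ r * P := mul_le_mul_of_nonneg_right h4 hP0.le
    have h6 : (8 * r : ℝ) * P * w < P * s := by
      calc (8 * r : ℝ) * P * w < g ^ r * w := mul_lt_mul_of_pos_right (by linarith) (by linarith)
        _ ≤ P * s := by rw [h2]; exact h3
    nlinarith
  have hrw : (r : ℝ) ≤ r * w := le_mul_of_one_le_right (by linarith) hw1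
  have hwr : w ≤ r * w := le_mul_of_one_le_left (by linarith) hr1
  have hsp : s ≤ p := by nlinarith
  have hrp : r < p := by
    have : (r : ℝ) < p := by linarith
    exact_mod_cast this
  let N : Finset (ZMod p) := Finset.univ.filter fun x =>
    ∀ i : Fin r, 1 + ((i : ℕ) + 1 : ZMod p) * x ∈ Units.val '' (G : Set (ZMod p)ˣ)
  have hc := count_b hrp G N (fun x => by simp [N])
  have hcount : (Nat.card G) * (N.erase 0).card ≤ Nat.card {ab : ZMod p × ZMod p //
            ab.2 ≠ 0 ∧ ∀ i : ℕ, i ≤ r →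
              ab.1 + (i : ZMod p) * ab.2 ∈ Units.val '' (G : Set (ZMod p)ˣ)} := by
    have : Nat.card (G × (N.erase 0 : Finset (ZMod p))) = Nat.card G * (N.erase 0).card := by
      rw [Nat.card_prod, Nat.card_eq_fintype_card (α := (N.erase 0 : Finset (ZMod p))), Fintype.card_coe]
    rw [← this]
    refine Nat.card_le_card_of_injective
      (fun u => ⟨((u.1 : (ZMod p)ˣ), ((u.1 : (ZMod p)ˣ) : ZMod p) * u.2.1), ?_, ?_⟩) ?_
    · exact mul_ne_zero (Units.ne_zero _) (Finset.ne_of_mem_erase u.2.2)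
    · intro i hi
      rcases i with _ | i
      · exact ⟨u.1, u.1.2, by simp⟩
      · have hx := (Finset.mem_filter.mp (Finset.mem_of_mem_erase u.2.2)).2 ⟨i, hi⟩
        obtain ⟨v, hv, hv2⟩ := hx
        refine ⟨u.1 * v, G.mul_mem u.1.2 hv, ?_⟩
        rw [Units.val_mul, hv2]
        push_cast
        ring
    · rintro ⟨a, b⟩ ⟨a', b'⟩ h
      have h1 := congrArg (fun z => z.1.1) h
      have h2 := congrArg (fun z => z.1.2) h
      simp only at h1 h2
      have h3 : a = a' := Subtype.ext (Units.ext h1)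
      subst h3
      have h4 := mul_left_cancel₀ (Units.ne_zero _) h2
      rw [Subtype.ext h4]
  have hcount' : g * ((N.card : ℝ) - 1) ≤ (Nat.card {ab : ZMod p × ZMod p //
            ab.2 ≠ 0 ∧ ∀ i : ℕ, i ≤ r →
              ab.1 + (i : ZMod p) * ab.2 ∈ Units.val '' (G : Set (ZMod p)ˣ)} : ℝ) := by
    have h1 : (N.card : ℝ) - 1 ≤ (N.erase 0).card := by
      have : N.card ≤ (N.erase 0).card + 1 := by
        have := Finset.pred_card_le_card_erase (s := N) (a := 0); omega
      have : (N.card : ℝ) ≤ (N.erase 0).card + 1 := by exact_mod_cast this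
      linarith
    refine (mul_le_mul_of_nonneg_left h1 hg0.le).trans ?_
    rw [hg]; exact_mod_cast hcount
  refine ge_iff_le.mpr (le_trans ?_ hcount')
  rw [mul_comm _ g]
  refine mul_le_mul_of_nonneg_left ?_ hg0.le
  have hratio : (g / p) ^ r * w ≤ 1 := by
    rw [hw, ← mul_pow]
    refine pow_le_one₀ (by positivity) ?_
    rw [div_mul_eq_mul_div, div_le_one hp0]; exact hgn
  have hfin : 1 / 2 * (p : ℝ) ≤ w * ((N.card : ℝ) - 1) := by
    have h1 : w * (r * s) ≤ p / 8 := by nlinarith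
    have h2 : w ≤ p / 8 := by linarith
    have h3 : (r : ℝ) ≤ p / 8 := by linarith
    linarith
  have h5 : 1 / 2 * (g / p) ^ r * p * w ≤ ((N.card : ℝ) - 1) * w := by
    calc 1 / 2 * (g / p) ^ r * p * w = (1 / 2 * p) * ((g / p) ^ r * w) := by ring
      _ ≤ 1 / 2 * p := mul_le_of_le_one_right (by positivity) hratio
      _ ≤ _ := by linarith
  exact le_of_mul_le_mul_right h5 (by linarith)

end Stp
end


/-- Proposition 2: For fixed `r ∈ ℤ⁺` there are constants `c_r, C_r > 0` such that for all
sufficiently large primes `p` and every subgroup `G ≤ 𝔽_p^*` of size `|G| > C_r·p^(1-1/(2r))`,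
the group `G` contains at least `c_r·(|G|/p)^r·p·|G|` non-trivial `(r+1)`-term arithmetic
progressions, counted as pairs `(a,b)` with `b ≠ 0` and `a, a+b, …, a+rb ∈ G`. -/
theorem count_progressions_in_multiplicative_groups (r : ℕ) (hr : 0 < r) :
    ∃ c : ℝ, 0 < c ∧ ∃ C : ℝ, 0 < C ∧ ∃ p₀ : ℕ, ∀ p : ℕ, p.Prime → p > p₀ →
      ∀ G : Subgroup (ZMod p)ˣ,
        (Nat.card G : ℝ) > C * (p : ℝ) ^ ((1 : ℝ) - 1 / (2 * (r : ℝ))) →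
        (Nat.card {ab : ZMod p × ZMod p //
            ab.2 ≠ 0 ∧ ∀ i : ℕ, i ≤ r →
              ab.1 + (i : ZMod p) * ab.2 ∈ Units.val '' (G : Set (ZMod p)ˣ)} : ℝ) ≥
          c * ((Nat.card G : ℝ) / (p : ℝ)) ^ r * (p : ℝ) * (Nat.card G : ℝ) := by
  refine ⟨1 / 2, by norm_num, 8 * r, by positivity, 0, ?_⟩
  intro p hp _ G hG
  have : Fact p.Prime := ⟨hp⟩
  exact Stp.final_aux hr G hG
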